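/- Let q ≥ 2 be an integer and 0 < H < 1 − 1/(2q). Then (1/(−log ε)) · Σ_{n≥1} (1/n) · P(|V_n| > ε n) converges to 2 as ε → 0⁺ (Spitzer's theorem for the variations of fractional Brownian motion, central-limit regime). -/

import Mathlib

open MeasureTheory ProbabilityTheory Filter Real Topology

/-- A (centered) fractional Brownian motion with Hurst parameter `H`:
all finite-dimensional distributions are centered Gaussian (equivalently, every finite
linear combination of values of the process is a centered real Gaussian), with covariance
`E (B s * B t) = (s^(2H) + t^(2H) - |t-s|^(2H)) / 2` for nonnegative times. -/
structure IsFractionalBrownianMotion {Ω : Type*} [MeasureSpace Ω]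
    (B : ℝ → Ω → ℝ) (H : ℝ) : Prop where
  measurable : ∀ t : ℝ, Measurable (B t)
  gaussian_fdd : ∀ (n : ℕ) (t : Fin n → ℝ), (∀ i, 0 ≤ t i) → ∀ c : Fin n → ℝ,
    ∃ v : NNReal,
      Measure.map (fun ω => ∑ i, c i * B (t i) ω) (ℙ : Measure Ω) = gaussianReal 0 v
  covariance : ∀ s t : ℝ, 0 ≤ s → 0 ≤ t →
    ∫ ω, B s ω * B t ω ∂(ℙ : Measure Ω)
      = (s ^ (2 * H) + t ^ (2 * H) - |t - s| ^ (2 * H)) / 2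

/-- `V_n = ∑_{k=0}^{n-1} H_q (n^H (B_{(k+1)/n} - B_{k/n}))`, where `H_q` is the Hermite
polynomial of degree `q`. -/
noncomputable def hermiteVariation {Ω : Type*} [MeasureSpace Ω]
    (B : ℝ → Ω → ℝ) (H : ℝ) (q n : ℕ) (ω : Ω) : ℝ :=
  ∑ k ∈ Finset.range n,
    Polynomial.aeval
      ((n : ℝ) ^ H * (B (((k : ℝ) + 1) / n) ω - B ((k : ℝ) / n) ω))
      (Polynomial.hermite q)


lemma integrable_poly_gaussian (p : Polynomial ℝ) :
    Integrable (fun x => p.eval x) (gaussianReal 0 1) := by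
  simp_rw [Polynomial.eval_eq_sum_range]
  refine integrable_finsetSum _ fun i _ => Integrable.const_mul ?_ _
  have h := (memLp_id_gaussianReal' (μ := 0) (v := 1) (i : ENNReal) (by simp)).integrable_norm_pow'
  refine (integrable_norm_iff (by fun_prop)).1 ?_
  simpa using h

lemma integrable_poly_mul_pdf (p : Polynomial ℝ) :
    Integrable (fun x => p.eval x * gaussianPDFReal 0 1 x) := by
  have h := integrable_poly_gaussian p
  rw [gaussianReal_of_var_ne_zero _ one_ne_zero,
    integrable_withDensity_iff_integrable_smul' (measurable_gaussianPDF 0 1)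
      (by simp [gaussianPDF_lt_top])] at h
  refine h.congr (ae_of_all _ fun x => ?_)
  simp [toReal_gaussianPDF, mul_comm]

lemma hasDerivAt_pdf (x : ℝ) :
    HasDerivAt (gaussianPDFReal 0 1) (-x * gaussianPDFReal 0 1 x) x := by
  have h1 : gaussianPDFReal 0 1 = fun x => (√(2 * π))⁻¹ * rexp (-x ^ 2 / 2) := by
    ext x; simp [gaussianPDFReal]
  rw [h1]
  have h2 : HasDerivAt (fun x : ℝ => -x ^ 2 / 2) (-x) x := by
    have := ((hasDerivAt_pow 2 x).neg).div_const 2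
    exact this.congr_deriv (by norm_num; ring)
  exact ((h2.exp).const_mul (√(2 * π))⁻¹).congr_deriv (by ring)

/-- One-dimensional Stein identity for polynomials. -/
lemma stein_poly (p : Polynomial ℝ) :
    ∫ x, x * p.eval x ∂(gaussianReal 0 1) = ∫ x, p.derivative.eval x ∂(gaussianReal 0 1) := by
  rw [integral_gaussianReal_eq_integral_smul one_ne_zero,
    integral_gaussianReal_eq_integral_smul one_ne_zero]
  have h := integral_mul_deriv_eq_deriv_mul_of_integrable (u := fun x => p.eval x)
    (v := gaussianPDFReal 0 1) (u' := fun x => p.derivative.eval x)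
    (v' := fun x => -x * gaussianPDFReal 0 1 x)
    (fun x _ => p.hasDerivAt x) (fun x _ => hasDerivAt_pdf x)
    (by
      refine (integrable_poly_mul_pdf (-(p * Polynomial.X))).congr (ae_of_all _ fun x => ?_)
      simp; ring)
    (integrable_poly_mul_pdf _) (integrable_poly_mul_pdf _)
  have h1 : ∀ x, gaussianPDFReal 0 1 x • (x * p.eval x) =
      - (p.eval x * (-x * gaussianPDFReal 0 1 x)) := fun x => by simp; ring
  simp_rw [h1, integral_neg, h, neg_neg, smul_eq_mul, mul_comm]


section AllLp
variable {Ω : Type*} [MeasurableSpace Ω] {P : Measure Ω}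

/-- Membership in every `L^r`, `r ∈ ℕ`. -/
def AllLp (P : Measure Ω) (f : Ω → ℝ) : Prop := ∀ r : ℕ, MemLp f r P

lemma AllLp.mul {f g : Ω → ℝ} (hf : AllLp P f) (hg : AllLp P g) :
    AllLp P (fun ω => f ω * g ω) := by
  intro r
  have : ENNReal.HolderTriple ((2 * r : ℕ) : ENNReal) ((2 * r : ℕ) : ENNReal) (r : ENNReal) := by
    constructor
    push_cast
    rw [ENNReal.mul_inv (by simp) (by simp), ← add_mul, ENNReal.inv_two_add_inv_two, one_mul]
  exact (hg (2 * r)).mul (hf (2 * r))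

lemma AllLp.const [IsFiniteMeasure P] (c : ℝ) : AllLp P (fun _ => c) :=
  fun _ => memLp_const c

lemma AllLp.sum {ι : Type*} (s : Finset ι) {f : ι → Ω → ℝ} (hf : ∀ i ∈ s, AllLp P (f i)) :
    AllLp P (fun ω => ∑ i ∈ s, f i ω) :=
  fun r => memLp_finsetSum s (fun i hi => hf i hi r)

lemma AllLp.prod [IsFiniteMeasure P] {ι : Type*} (s : Finset ι) {f : ι → Ω → ℝ}
    (hf : ∀ i ∈ s, AllLp P (f i)) :
    AllLp P (fun ω => ∏ i ∈ s, f i ω) := by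
  classical
  induction s using Finset.induction_on with
  | empty => simpa using AllLp.const (P := P) 1
  | insert a s ha ih =>
    simp_rw [Finset.prod_insert ha]
    exact (hf a (by simp)).mul (ih fun i hi => hf i (by simp [hi]))

lemma AllLp.pow [IsFiniteMeasure P] {f : Ω → ℝ} (hf : AllLp P f) (n : ℕ) :
    AllLp P (fun ω => f ω ^ n) := by
  have := AllLp.prod (P := P) (Finset.range n) (f := fun _ => f) (fun _ _ => hf)
  simpa using this

lemma AllLp.poly [IsFiniteMeasure P] {f : Ω → ℝ} (hf : AllLp P f) (p : Polynomial ℝ) :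
    AllLp P (fun ω => p.eval (f ω)) := by
  simp_rw [Polynomial.eval_eq_sum_range]
  exact AllLp.sum _ fun i _ => (AllLp.const _).mul (hf.pow i)

lemma AllLp.integrable {f : Ω → ℝ} (hf : AllLp P f) : Integrable f P := by
  have := hf 1
  rw [Nat.cast_one] at this
  exact memLp_one_iff_integrable.1 this

end AllLp

/-- A centered Gaussian vector with unit variances and covariance matrix `ρ`. -/
structure StdGauss {Ω ι : Type*} [Fintype ι] [MeasurableSpace Ω] (P : Measure Ω)
    (X : ι → Ω → ℝ) (ρ : ι → ι → ℝ) : Prop where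
  meas : ∀ i, Measurable (X i)
  gauss : HasGaussianLaw (fun ω i => X i ω) P
  mean : ∀ i, ∫ ω, X i ω ∂P = 0
  cov : ∀ i j, ∫ ω, X i ω * X j ω ∂P = ρ i j
  diag : ∀ i, ρ i i = 1

namespace StdGauss
variable {Ω ι : Type*} [Fintype ι] [MeasurableSpace Ω] {P : Measure Ω}
    [IsProbabilityMeasure P] {X : ι → Ω → ℝ} {ρ : ι → ι → ℝ}

lemma allLp (h : StdGauss P X ρ) (i : ι) : AllLp P (X i) :=
  fun _ => (h.gauss.eval i).memLp (by simp)

lemma comp {κ : Type*} [Fintype κ] (h : StdGauss P X ρ) (f : κ → ι) :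
    StdGauss P (fun k => X (f k)) (fun k l => ρ (f k) (f l)) where
  meas k := h.meas _
  mean k := h.mean _
  cov k l := h.cov _ _
  diag k := h.diag _
  gauss := h.gauss.map_fun (ContinuousLinearMap.pi fun k => ContinuousLinearMap.proj (f k))

lemma map_eq (h : StdGauss P X ρ) (i : ι) : P.map (X i) = gaussianReal 0 1 := by
  rw [(h.gauss.eval i).map_eq_gaussianReal, h.mean i,
    variance_of_integral_eq_zero (h.meas i).aemeasurable (h.mean i)]
  have := h.cov i i
  simp_rw [← pow_two, h.diag] at this
  simp [this]

/-- Gaussian integration by parts. -/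
lemma ibp [DecidableEq ι] (h : StdGauss P X ρ) (i : ι) (p : ι → Polynomial ℝ) :
    ∫ ω, X i ω * ∏ k, (p k).eval (X k ω) ∂P =
      ∑ j, ρ i j * ∫ ω, (p j).derivative.eval (X j ω) *
        ∏ k ∈ Finset.univ.erase j, (p k).eval (X k ω) ∂P := by
  classical
  set Z : Ω → ι → ℝ := fun ω k => X k ω - ρ i k * X i ω with hZ
  set Q : (ι → ℝ) → Polynomial ℝ := fun z =>
    ∏ k, (p k).comp (Polynomial.C (ρ i k) * Polynomial.X + Polynomial.C (z k)) with hQ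
  have hZm : Measurable Z := by
    refine measurable_pi_lambda _ fun k => ?_
    exact (h.meas k).sub ((h.meas i).const_mul _)
  have hg : HasGaussianLaw (fun ω => ((fun _ : Unit => X i ω), fun k => Z ω k)) P := by
    have := h.gauss.map_fun (((ContinuousLinearMap.pi fun _ : Unit =>
      (ContinuousLinearMap.proj i : (ι → ℝ) →L[ℝ] ℝ))).prod
      (ContinuousLinearMap.pi fun k => (ContinuousLinearMap.proj k : (ι → ℝ) →L[ℝ] ℝ) -
        (ρ i k) • (ContinuousLinearMap.proj i : (ι → ℝ) →L[ℝ] ℝ)))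
    exact this
  have hintg2 : ∀ k l, Integrable (fun ω => X k ω * X l ω) P :=
    fun k l => ((h.allLp k).mul (h.allLp l)).integrable
  have hind : IndepFun (X i) Z P := by
    have h1 := HasGaussianLaw.indepFun_of_covariance_eval (P := P)
      (X := fun _ : Unit => X i) (Y := fun k ω => Z ω k) hg ?_
    · have hm : Measurable (fun f : Unit → ℝ => f ()) := measurable_pi_apply ()
      exact h1.comp hm measurable_id
    · intro _ k
      rw [covariance_eq_sub, h.mean i, zero_mul, sub_zero]
      · simp only [hZ, Pi.mul_apply, mul_sub]
        have : ∀ ω, X i ω * (ρ i k * X i ω) = ρ i k * (X i ω * X i ω) := fun ω => by ring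
        simp_rw [this]
        rw [integral_sub (hintg2 _ _) ((hintg2 _ _).const_mul _), integral_const_mul, h.cov, h.cov,
          h.diag]
        ring
      · exact (h.gauss.eval i).memLp_two
      · exact (h.gauss.eval k).memLp_two.sub ((h.gauss.eval i).memLp_two.const_mul _)
  have hprod : P.map (fun ω => (X i ω, Z ω)) = (gaussianReal 0 1).prod (P.map Z) := by
    rw [(indepFun_iff_map_prod_eq_prod_map_map (h.meas i).aemeasurable hZm.aemeasurable).1 hind,
      h.map_eq]
  have hpm : Measurable (fun ω => (X i ω, Z ω)) := (h.meas i).prodMk hZm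
  have hQe : ∀ ω, (Q (Z ω)).eval (X i ω) = ∏ k, (p k).eval (X k ω) := by
    intro ω
    simp only [hQ, Polynomial.eval_prod, Polynomial.eval_comp, hZ]
    refine Finset.prod_congr rfl fun k _ => ?_
    congr 1
    simp
  have hQd : ∀ z x, (Q z).derivative.eval x = ∑ j, ρ i j *
      ((p j).derivative.eval (ρ i j * x + z j) *
        ∏ k ∈ Finset.univ.erase j, (p k).eval (ρ i k * x + z k)) := by
    intro z x
    simp only [hQ, Polynomial.derivative_prod_finset, Polynomial.eval_finsetSum, Polynomial.eval_mul,
      Polynomial.eval_prod, Polynomial.derivative_comp, Polynomial.eval_comp]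
    refine Finset.sum_congr rfl fun j _ => ?_
    simp
    ring
  have hQde : ∀ ω, (Q (Z ω)).derivative.eval (X i ω) = ∑ j, ρ i j *
      ((p j).derivative.eval (X j ω) * ∏ k ∈ Finset.univ.erase j, (p k).eval (X k ω)) := by
    intro ω
    rw [hQd]
    simp [hZ]
  have hQm : Measurable (fun y : ℝ × (ι → ℝ) => y.1 * (Q y.2).eval y.1) := by
    simp only [hQ, Polynomial.eval_prod, Polynomial.eval_comp]
    simp only [Polynomial.eval_add, Polynomial.eval_mul, Polynomial.eval_C, Polynomial.eval_X]
    refine measurable_fst.mul (Finset.measurable_prod _ fun k _ => ?_)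
    exact (p k).continuous.measurable.comp (by fun_prop)
  have hQdm : Measurable (fun y : ℝ × (ι → ℝ) => (Q y.2).derivative.eval y.1) := by
    simp only [hQd]
    refine Finset.measurable_sum _ fun j _ => Measurable.const_mul (Measurable.mul ?_ ?_) _
    · exact (p j).derivative.continuous.measurable.comp (by fun_prop)
    · refine (Finset.measurable_prod _ fun k _ => ?_)
      exact (p k).continuous.measurable.comp (by fun_prop)
  have hI1 : Integrable (fun ω => X i ω * ∏ k, (p k).eval (X k ω)) P :=
    ((h.allLp i).mul (AllLp.prod _ fun k _ => (h.allLp k).poly _)).integrable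
  have hIj : ∀ j, Integrable (fun ω => (p j).derivative.eval (X j ω) *
        ∏ k ∈ Finset.univ.erase j, (p k).eval (X k ω)) P := fun j =>
    (((h.allLp j).poly _).mul (AllLp.prod _ fun k _ => (h.allLp k).poly _)).integrable
  have hI2 : Integrable (fun ω => (Q (Z ω)).derivative.eval (X i ω)) P := by
    simp_rw [hQde]
    exact integrable_finsetSum _ fun j _ => (hIj j).const_mul _
  calc ∫ ω, X i ω * ∏ k, (p k).eval (X k ω) ∂P
      = ∫ ω, X i ω * (Q (Z ω)).eval (X i ω) ∂P := by simp_rw [hQe]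
    _ = ∫ y, y.1 * (Q y.2).eval y.1 ∂(P.map (fun ω => (X i ω, Z ω))) := by
        rw [integral_map hpm.aemeasurable hQm.aestronglyMeasurable]
    _ = ∫ y, (Q y.2).derivative.eval y.1 ∂(P.map (fun ω => (X i ω, Z ω))) := by
        have e1 : Integrable (fun y : ℝ × (ι → ℝ) => y.1 * (Q y.2).eval y.1)
            (P.map (fun ω => (X i ω, Z ω))) := by
          rw [integrable_map_measure hQm.aestronglyMeasurable hpm.aemeasurable]
          simpa only [Function.comp_def, hQe] using hI1
        have e2 : Integrable (fun y : ℝ × (ι → ℝ) => (Q y.2).derivative.eval y.1)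
            (P.map (fun ω => (X i ω, Z ω))) := by
          rw [integrable_map_measure hQdm.aestronglyMeasurable hpm.aemeasurable]
          exact hI2
        rw [hprod] at e1 e2 ⊢
        have : IsProbabilityMeasure (P.map Z) := Measure.isProbabilityMeasure_map hZm.aemeasurable
        rw [integral_prod_symm _ e1, integral_prod_symm _ e2]
        simp only [stein_poly]
    _ = ∫ ω, (Q (Z ω)).derivative.eval (X i ω) ∂P := by
        rw [integral_map hpm.aemeasurable hQdm.aestronglyMeasurable]
    _ = _ := by
        simp_rw [hQde]
        rw [integral_finsetSum _ fun j _ => (hIj j).const_mul _]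
        simp_rw [integral_const_mul]

end StdGauss


/-- Hermite polynomial with real coefficients. -/
noncomputable def hm (a : ℕ) : Polynomial ℝ := (Polynomial.hermite a).map (Int.castRingHom ℝ)

lemma hm_zero : hm 0 = 1 := by simp [hm]

lemma hm_succ (a : ℕ) : hm (a + 1) = Polynomial.X * hm a - (hm a).derivative := by
  simp [hm, Polynomial.hermite_succ, Polynomial.derivative_map]

lemma hm_derivative (a : ℕ) : (hm a).derivative = Polynomial.C (a : ℝ) * hm (a - 1) := by
  induction a with
  | zero => simp [hm_zero]
  | succ n ih =>
    rw [hm_succ n]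
    rcases n with _ | m
    · simp [hm_zero]
    · rw [Polynomial.derivative_sub, Polynomial.derivative_mul, Polynomial.derivative_X, ih]
      simp only [Nat.add_sub_cancel, Polynomial.derivative_mul, Polynomial.derivative_C, zero_mul,
        zero_add, hm_succ m]
      push_cast
      simp only [Polynomial.C_add, Polynomial.C_1]
      ring

namespace StdGauss
variable {Ω ι : Type*} [Fintype ι] [MeasurableSpace Ω] {P : Measure Ω}
    [IsProbabilityMeasure P] {X : ι → Ω → ℝ} {ρ : ι → ι → ℝ}

/-- Joint Hermite moment. -/
noncomputable def _root_.hmom (P : Measure Ω) (X : ι → Ω → ℝ) (a : ι → ℕ) : ℝ :=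
  ∫ ω, ∏ k, (hm (a k)).eval (X k ω) ∂P

lemma hmom_rec [DecidableEq ι] (h : StdGauss P X ρ) (i : ι) (a : ι → ℕ) :
    hmom P X (Function.update a i (a i + 1)) =
      ∑ j ∈ Finset.univ.erase i, ρ i j * (a j * hmom P X (Function.update a j (a j - 1))) := by
  have key := h.ibp i (fun k => hm (a k))
  have hdj : ∀ j, ∫ ω, (hm (a j)).derivative.eval (X j ω) *
        ∏ k ∈ Finset.univ.erase j, (hm (a k)).eval (X k ω) ∂P
        = a j * hmom P X (Function.update a j (a j - 1)) := by
    intro j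
    rw [hmom, ← integral_const_mul]
    congr 1; ext ω
    rw [← Finset.mul_prod_erase Finset.univ _ (Finset.mem_univ j), hm_derivative]
    simp only [Function.update_self, Polynomial.eval_mul, Polynomial.eval_C]
    rw [mul_assoc]
    congr 2
    refine Finset.prod_congr rfl fun k hk => ?_
    rw [Function.update_of_ne (Finset.ne_of_mem_erase hk)]
  have hI1 : Integrable (fun ω => X i ω * ∏ k, (hm (a k)).eval (X k ω)) P :=
    ((h.allLp i).mul (AllLp.prod _ fun k _ => (h.allLp k).poly _)).integrable
  have hI2 : Integrable (fun ω => (hm (a i)).derivative.eval (X i ω) *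
        ∏ k ∈ Finset.univ.erase i, (hm (a k)).eval (X k ω)) P :=
    (((h.allLp i).poly _).mul (AllLp.prod _ fun k _ => (h.allLp k).poly _)).integrable
  have e : hmom P X (Function.update a i (a i + 1)) =
      ∫ ω, X i ω * ∏ k, (hm (a k)).eval (X k ω) ∂P -
      ∫ ω, (hm (a i)).derivative.eval (X i ω) *
        ∏ k ∈ Finset.univ.erase i, (hm (a k)).eval (X k ω) ∂P := by
    rw [← integral_sub hI1 hI2, hmom]
    congr 1; ext ω
    rw [← Finset.mul_prod_erase Finset.univ _ (Finset.mem_univ i),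
      ← Finset.mul_prod_erase Finset.univ (fun k => (hm (a k)).eval (X k ω)) (Finset.mem_univ i)]
    simp only [Function.update_self, hm_succ, Polynomial.eval_sub, Polynomial.eval_mul,
      Polynomial.eval_X]
    have : ∏ k ∈ Finset.univ.erase i, (hm (Function.update a i (a i + 1) k)).eval (X k ω) =
        ∏ k ∈ Finset.univ.erase i, (hm (a k)).eval (X k ω) :=
      Finset.prod_congr rfl fun k hk => by
        rw [Function.update_of_ne (Finset.ne_of_mem_erase hk)]
    rw [this]
    ring
  rw [e, key, ← Finset.add_sum_erase Finset.univ _ (Finset.mem_univ i), h.diag, one_mul,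
    add_sub_cancel_left]
  exact Finset.sum_congr rfl fun j _ => by rw [hdj]

lemma hmom_zero : hmom P X (fun _ => 0) = 1 := by
  simp [hmom, hm_zero]

/-- Orthogonality of Hermite polynomials. -/
lemma hmom_two {X : Fin 2 → Ω → ℝ} {ρ : Fin 2 → Fin 2 → ℝ} (h : StdGauss P X ρ) (q : ℕ) :
    hmom P X (fun _ => q) = q.factorial * ρ 0 1 ^ q := by
  induction q with
  | zero => simpa using hmom_zero
  | succ n ih =>
    have := h.hmom_rec 0 ![n, n + 1]
    have e1 : Function.update ![n, n + 1] 0 (![n, n + 1] 0 + 1) = fun _ => n + 1 := by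
      ext i; fin_cases i <;> simp
    have e2 : (Finset.univ.erase (0 : Fin 2)) = {1} := by decide
    have e3 : Function.update ![n, n + 1] 1 n = fun _ => n := by
      ext i; fin_cases i <;> simp
    rw [e1, e2] at this
    rw [this]
    simp [e3, ih, Nat.factorial_succ]
    ring

/-- Monomials in the covariances arising from complete pairings. -/
inductive _root_.Reach [DecidableEq ι] (ρ : ι → ι → ℝ) : (ι → ℕ) → ℝ → Prop
  | zero : Reach ρ (fun _ => 0) 1
  | step (i j : ι) (a : ι → ℕ) (m : ℝ) (hij : i ≠ j) (h : Reach ρ a m) :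
      Reach ρ (fun k => a k + (if k = i then 1 else 0) + (if k = j then 1 else 0)) (|ρ i j| * m)

lemma hmom_bound_aux [DecidableEq ι] (N : ℕ) : ∀ a : ι → ℕ, ∑ k, a k = N →
    ∃ C : ℝ, 0 ≤ C ∧ ∀ (X : ι → Ω → ℝ) (ρ : ι → ι → ℝ), StdGauss P X ρ → ∀ B : ℝ, 0 ≤ B →
      (∀ m, Reach ρ a m → m ≤ B) → |hmom P X a| ≤ C * B := by
  induction N using Nat.strong_induction_on with
  | _ N ih =>
  intro a ha
  by_cases hz : ∀ k, a k = 0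
  · have : a = fun _ => 0 := funext hz
    subst this
    refine ⟨1, zero_le_one, fun X ρ h B _ hB => ?_⟩
    rw [hmom_zero]
    simpa using hB 1 Reach.zero
  · push Not at hz
    obtain ⟨i, hi⟩ := hz
    set b := Function.update a i (a i - 1) with hb
    have hbi : b i = a i - 1 := by simp [hb]
    have hab : a = Function.update b i (b i + 1) := by
      ext k
      by_cases hk : k = i
      · subst hk; simp [hb]; omega
      · simp [hb, hk]
    have hbs : ∑ k, b k < N := by
      rw [← ha]
      refine Finset.sum_lt_sum (fun k _ => ?_) ⟨i, Finset.mem_univ _, by rw [hbi]; omega⟩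
      by_cases hk : k = i
      · subst hk; simp [hb]
      · simp [hb, hk]
    have hex : ∀ j, ∃ C : ℝ, 0 ≤ C ∧ ∀ (X : ι → Ω → ℝ) (ρ : ι → ι → ℝ), StdGauss P X ρ →
        ∀ B : ℝ, 0 ≤ B →
        (∀ m, Reach ρ (Function.update b j (b j - 1)) m → m ≤ B) →
          |hmom P X (Function.update b j (b j - 1))| ≤ C * B := by
      intro j
      refine ih _ ?_ _ rfl
      refine lt_of_le_of_lt (Finset.sum_le_sum fun k _ => ?_) hbs
      by_cases hk : k = j
      · subst hk; simp
      · simp [hk]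
    choose C hC0 hC using hex
    refine ⟨∑ j, b j * C j, Finset.sum_nonneg fun j _ => by have := hC0 j; positivity, ?_⟩
    intro X ρ h B hB0 hB
    rw [hab, h.hmom_rec i b]
    refine (Finset.abs_sum_le_sum_abs _ _).trans ?_
    rw [Finset.sum_mul]
    refine (Finset.sum_le_sum (g := fun j => b j * C j * B) fun j hj => ?_).trans
      (Finset.sum_le_sum_of_subset_of_nonneg (Finset.erase_subset _ _)
        fun j _ _ => by have := hC0 j; positivity)
    have hji : j ≠ i := Finset.ne_of_mem_erase hj
    by_cases hρ : ρ i j = 0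
    · rw [hρ]; simp; have := hC0 j; positivity
    by_cases hbj : b j = 0
    · simp [hbj]
    have hρ' : 0 < |ρ i j| := abs_pos.2 hρ
    have hmain := hC j X ρ h (B / |ρ i j|) (by positivity) (by
      intro m hm
      rw [le_div_iff₀ hρ', mul_comm]
      refine hB _ ?_
      have := Reach.step i j _ m hji.symm hm
      convert this using 1
      ext k
      by_cases hki : k = i
      · subst hki; simp [hji.symm, hb]; omega
      · by_cases hkj : k = j
        · subst hkj; simp [hki]; rw [hb] at hbj; simp [hki] at hbj; simp [hb, hki]; omega
        · simp [hki, hkj, hb])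
    rw [abs_mul, abs_mul, Nat.abs_cast]
    calc |ρ i j| * (b j * |hmom P X (Function.update b j (b j - 1))|)
        ≤ |ρ i j| * (b j * (C j * (B / |ρ i j|))) := by gcongr
      _ = b j * C j * B := by field_simp

lemma reach_four {ρ : Fin 4 → Fin 4 → ℝ} (hs : ∀ i j, ρ i j = ρ j i) {a : Fin 4 → ℕ} {m : ℝ}
    (h : Reach ρ a m) : ∃ x y z u v w : ℕ,
      m = |ρ 0 1| ^ x * |ρ 2 3| ^ y * |ρ 0 2| ^ z * |ρ 1 3| ^ u * |ρ 0 3| ^ v * |ρ 1 2| ^ w ∧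
      a 0 = x + z + v ∧ a 1 = x + u + w ∧ a 2 = y + z + w ∧ a 3 = y + u + v := by
  induction h with
  | zero => exact ⟨0, 0, 0, 0, 0, 0, by simp⟩
  | step i j a m hij h ih =>
    obtain ⟨x, y, z, u, v, w, hm, h0, h1, h2, h3⟩ := ih
    subst hm
    have s10 := hs 1 0
    have s32 := hs 3 2
    have s20 := hs 2 0
    have s31 := hs 3 1
    have s30 := hs 3 0
    have s21 := hs 2 1
    fin_cases i <;> fin_cases j <;> simp at hij <;> simp only [Fin.isValue, Fin.zero_eta, Fin.mk_one, Fin.reduceFinMk, s10, s32, s20, s31, s30, s21]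
    all_goals first
      | exact ⟨x + 1, y, z, u, v, w, by ring, by simp; omega, by simp; omega, by simp; omega, by simp; omega⟩
      | exact ⟨x, y + 1, z, u, v, w, by ring, by simp; omega, by simp; omega, by simp; omega, by simp; omega⟩
      | exact ⟨x, y, z + 1, u, v, w, by ring, by simp; omega, by simp; omega, by simp; omega, by simp; omega⟩
      | exact ⟨x, y, z, u + 1, v, w, by ring, by simp; omega, by simp; omega, by simp; omega, by simp; omega⟩
      | exact ⟨x, y, z, u, v + 1, w, by ring, by simp; omega, by simp; omega, by simp; omega, by simp; omega⟩
      | exact ⟨x, y, z, u, v, w + 1, by ring, by simp; omega, by simp; omega, by simp; omega, by simp; omega⟩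

/-- Fourth joint Hermite moment bound. -/
lemma hmom_four (q : ℕ) :
    ∃ C : ℝ, 0 ≤ C ∧ ∀ (X : Fin 4 → Ω → ℝ) (ρ : Fin 4 → Fin 4 → ℝ), StdGauss P X ρ →
      |hmom P X (fun _ => q)| ≤ C * ((|ρ 0 1| * |ρ 2 3|) ^ q + (|ρ 0 2| * |ρ 1 3|) ^ q +
        (|ρ 0 3| * |ρ 1 2|) ^ q) := by
  obtain ⟨C, hC0, hC⟩ := hmom_bound_aux (P := P) (ι := Fin 4) _ (fun _ => q) rfl
  refine ⟨C, hC0, fun X ρ h => hC X ρ h _ (by positivity) fun m hm => ?_⟩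
  have hs : ∀ i j, ρ i j = ρ j i := fun i j => by
    rw [← h.cov, ← h.cov]; simp_rw [mul_comm]
  obtain ⟨x, y, z, u, v, w, hm, h0, h1, h2, h3⟩ := reach_four hs hm
  have e1 : y = x := by omega
  have e2 : u = z := by omega
  have e3 : w = v := by omega
  have hq : q = x + z + v := h0
  subst hm
  rw [e1, e2, e3]
  set A := |ρ 0 1| * |ρ 2 3|
  set B := |ρ 0 2| * |ρ 1 3|
  set D := |ρ 0 3| * |ρ 1 2|
  have hA : 0 ≤ A := by positivity
  have hB : 0 ≤ B := by positivity
  have hD : 0 ≤ D := by positivity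
  have : |ρ 0 1| ^ x * |ρ 2 3| ^ x * |ρ 0 2| ^ z * |ρ 1 3| ^ z * |ρ 0 3| ^ v * |ρ 1 2| ^ v
      = A ^ x * B ^ z * D ^ v := by simp only [A, B, D, mul_pow]; ring
  rw [this]
  obtain ⟨M, hMA, hMB, hMD, hM⟩ : ∃ M, A ≤ M ∧ B ≤ M ∧ D ≤ M ∧ (M = A ∨ M = B ∨ M = D) := by
    rcases le_total A B with h1 | h1 <;> rcases le_total B D with h2 | h2 <;>
      rcases le_total A D with h3 | h3
    all_goals first
      | exact ⟨A, by linarith, by linarith, by linarith, by simp⟩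
      | exact ⟨B, by linarith, by linarith, by linarith, by simp⟩
      | exact ⟨D, by linarith, by linarith, by linarith, by simp⟩
  have hM0 : 0 ≤ M := hA.trans hMA
  calc A ^ x * B ^ z * D ^ v ≤ M ^ x * M ^ z * M ^ v := by gcongr
    _ = M ^ q := by rw [hq]; ring
    _ ≤ _ := by
      rcases hM with rfl | rfl | rfl
      · have : 0 ≤ B ^ q := by positivity
        have : 0 ≤ D ^ q := by positivity
        linarith
      · have : 0 ≤ A ^ q := by positivity
        have : 0 ≤ D ^ q := by positivity
        linarith
      · have : 0 ≤ A ^ q := by positivity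
        have : 0 ≤ B ^ q := by positivity
        linarith

end StdGauss


namespace StdGauss
variable {Ω : Type*} [MeasurableSpace Ω] {P : Measure Ω}
    [IsProbabilityMeasure P]

/-- The Hermite variation of a vector. -/
noncomputable def _root_.hsum {Ω : Type*} (q : ℕ) {n : ℕ} (X : Fin n → Ω → ℝ) (ω : Ω) : ℝ :=
  ∑ k, (hm q).eval (X k ω)

lemma hsum_allLp {n : ℕ} {X : Fin n → Ω → ℝ} {ρ : Fin n → Fin n → ℝ} (h : StdGauss P X ρ)
    (q : ℕ) : AllLp P (hsum q X) := by
  unfold hsum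
  exact AllLp.sum _ fun k _ => (h.allLp k).poly _

lemma hsum_meas {n : ℕ} {X : Fin n → Ω → ℝ} {ρ : Fin n → Fin n → ℝ} (h : StdGauss P X ρ)
    (q : ℕ) : Measurable (hsum q X) := by
  unfold hsum
  exact Finset.measurable_sum _ fun k _ => (hm q).continuous.measurable.comp (h.meas k)

lemma hsum_sq {n : ℕ} {X : Fin n → Ω → ℝ} {ρ : Fin n → Fin n → ℝ} (h : StdGauss P X ρ)
    (q : ℕ) : ∫ ω, hsum q X ω ^ 2 ∂P = q.factorial * ∑ k, ∑ l, ρ k l ^ q := by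
  have e : ∀ ω, hsum q X ω ^ 2 = ∑ k, ∑ l, (hm q).eval (X k ω) * (hm q).eval (X l ω) := by
    intro ω
    rw [pow_two, hsum, Finset.sum_mul_sum]
  have hi : ∀ k l, Integrable (fun ω => (hm q).eval (X k ω) * (hm q).eval (X l ω)) P :=
    fun k l => (((h.allLp k).poly _).mul ((h.allLp l).poly _)).integrable
  simp_rw [e]
  rw [integral_finsetSum _ fun k _ => integrable_finsetSum _ fun l _ => hi k l, Finset.mul_sum]
  refine Finset.sum_congr rfl fun k _ => ?_
  rw [integral_finsetSum _ fun l _ => hi k l, Finset.mul_sum]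
  refine Finset.sum_congr rfl fun l _ => ?_
  have := (h.comp ![k, l]).hmom_two q
  simp only [hmom, Fin.prod_univ_two] at this
  simpa using this

lemma hsum_four (q : ℕ) : ∃ C : ℝ, 0 ≤ C ∧ ∀ (n : ℕ) (X : Fin n → Ω → ℝ)
    (ρ : Fin n → Fin n → ℝ), StdGauss P X ρ →
    ∫ ω, hsum q X ω ^ 4 ∂P ≤ C * (∑ k, ∑ l, |ρ k l| ^ q) ^ 2 := by
  obtain ⟨C, hC0, hC⟩ := hmom_four (P := P) q
  refine ⟨3 * C, by positivity, fun n X ρ h => ?_⟩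
  have hfun : ∀ k : Fin n, AllLp P (fun ω => (hm q).eval (X k ω)) := fun k => (h.allLp k).poly _
  have e : ∀ ω, hsum q X ω ^ 4 = ∑ i, ∑ j, ∑ k, ∑ l,
      (hm q).eval (X i ω) * (hm q).eval (X j ω) * ((hm q).eval (X k ω) * (hm q).eval (X l ω)) := by
    intro ω
    have : hsum q X ω ^ 4 = (hsum q X ω * hsum q X ω) * (hsum q X ω * hsum q X ω) := by ring
    rw [this, hsum]
    simp only [Finset.sum_mul_sum]
    exact Finset.sum_congr rfl fun i _ => Finset.sum_comm
  have hi : ∀ i j k l, Integrable (fun ω => (hm q).eval (X i ω) * (hm q).eval (X j ω) *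
      ((hm q).eval (X k ω) * (hm q).eval (X l ω))) P :=
    fun i j k l => (((hfun i).mul (hfun j)).mul ((hfun k).mul (hfun l))).integrable
  have hb : ∀ i j k l, ∫ ω, (hm q).eval (X i ω) * (hm q).eval (X j ω) *
      ((hm q).eval (X k ω) * (hm q).eval (X l ω)) ∂P ≤
      C * (|ρ i j| ^ q * |ρ k l| ^ q + |ρ i k| ^ q * |ρ j l| ^ q + |ρ i l| ^ q * |ρ j k| ^ q) := by
    intro i j k l
    have := (le_abs_self _).trans (hC _ _ (h.comp ![i, j, k, l]))
    simp only [hmom, Fin.prod_univ_four, mul_pow] at this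
    simpa [mul_assoc] using this
  simp_rw [e]
  rw [integral_finsetSum _ fun i _ => integrable_finsetSum _ fun j _ => integrable_finsetSum _
    fun k _ => integrable_finsetSum _ fun l _ => hi i j k l]
  simp_rw [integral_finsetSum Finset.univ fun j _ => integrable_finsetSum Finset.univ
    fun k _ => integrable_finsetSum Finset.univ fun l _ => hi _ j k l,
    integral_finsetSum Finset.univ
    fun k _ => integrable_finsetSum Finset.univ fun l _ => hi _ _ k l,
    integral_finsetSum Finset.univ fun l _ => hi _ _ _ l]
  refine (Finset.sum_le_sum fun i _ => Finset.sum_le_sum fun j _ => Finset.sum_le_sum fun k _ =>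
    Finset.sum_le_sum fun l _ => hb i j k l).trans (le_of_eq ?_)
  simp only [mul_add, Finset.sum_add_distrib]
  have e1 : ∑ i, ∑ j, ∑ k, ∑ l, C * (|ρ i j| ^ q * |ρ k l| ^ q) =
      C * (∑ k, ∑ l, |ρ k l| ^ q) ^ 2 := by
    simp only [← Finset.mul_sum, ← Finset.sum_mul, pow_two]
  have e2 : ∑ i, ∑ j, ∑ k, ∑ l, C * (|ρ i k| ^ q * |ρ j l| ^ q) =
      C * (∑ k, ∑ l, |ρ k l| ^ q) ^ 2 := by
    rw [← e1]
    refine Finset.sum_congr rfl fun i _ => ?_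
    exact Finset.sum_comm
  have e3 : ∑ i, ∑ j, ∑ k, ∑ l, C * (|ρ i l| ^ q * |ρ j k| ^ q) =
      C * (∑ k, ∑ l, |ρ k l| ^ q) ^ 2 := by
    rw [← e2]
    refine Finset.sum_congr rfl fun i _ => Finset.sum_congr rfl fun j _ => ?_
    exact Finset.sum_comm
  rw [e1, e2, e3]
  ring

/-- A quantitative Paley-Zygmund type inequality. -/
lemma _root_.paley_zygmund {S : Ω → ℝ} (hm : Measurable S) (hS : AllLp P S) (d lam : ℝ)
    (hd : 0 ≤ d) (hl : 0 < lam) :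
    ∫ ω, S ω ^ 2 ∂P ≤ d ^ 2 + lam / 2 * ∫ ω, S ω ^ 4 ∂P +
      1 / (2 * lam) * (1 - P.real {ω | |S ω| ≤ d}) := by
  have hms : MeasurableSet {ω | |S ω| ≤ d} := measurableSet_le hm.abs measurable_const
  have h2 : Integrable (fun ω => S ω ^ 2) P := (hS.pow 2).integrable
  have h4 : Integrable (fun ω => S ω ^ 4) P := (hS.pow 4).integrable
  have hI : Integrable ({ω | |S ω| ≤ d}ᶜ.indicator (fun _ => (1 : ℝ))) P :=
    (integrable_const 1).indicator hms.compl
  have hle : ∀ ω, S ω ^ 2 ≤ d ^ 2 + lam / 2 * S ω ^ 4 +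
      1 / (2 * lam) * {ω | |S ω| ≤ d}ᶜ.indicator (fun _ => (1 : ℝ)) ω := by
    intro ω
    by_cases hω : |S ω| ≤ d
    · have : S ω ^ 2 ≤ d ^ 2 := by rw [← sq_abs]; gcongr
      have h0 : 0 ≤ lam / 2 * S ω ^ 4 := by positivity
      simp [hω]
      linarith
    · have : {ω | |S ω| ≤ d}ᶜ.indicator (fun _ => (1 : ℝ)) ω = 1 := by
        simp [hω]
      rw [this]
      have h0 : 0 ≤ d ^ 2 := by positivity
      have : lam / 2 * S ω ^ 4 + 1 / (2 * lam) * 1 - S ω ^ 2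
          = (lam * S ω ^ 2 - 1) ^ 2 / (2 * lam) := by field_simp; ring
      have : 0 ≤ (lam * S ω ^ 2 - 1) ^ 2 / (2 * lam) := by positivity
      linarith
  have := integral_mono h2 (((integrable_const _).add (h4.const_mul _)).add (hI.const_mul _)) hle
  refine this.trans (le_of_eq ?_)
  rw [integral_add' ((integrable_const _).add (h4.const_mul _)) (hI.const_mul _),
    integral_add' (integrable_const _) (h4.const_mul _), integral_const_mul, integral_const_mul,
    integral_indicator hms.compl]
  simp [prob_compl_eq_one_sub hms, measureReal_compl hms]

lemma _root_.chebyshev_two {S : Ω → ℝ} (hS : AllLp P S) (x : ℝ) (hx : 0 < x) :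
    P.real {ω | x < |S ω|} ≤ (∫ ω, S ω ^ 2 ∂P) / x ^ 2 := by
  rw [le_div_iff₀ (by positivity), mul_comm]
  have := mul_meas_ge_le_integral_of_nonneg (μ := P) (f := fun ω => S ω ^ 2)
    (ae_of_all _ fun ω => sq_nonneg _) (hS.pow 2).integrable (x ^ 2)
  refine le_trans ?_ this
  refine mul_le_mul_of_nonneg_left (measureReal_mono (fun ω hω => ?_)) (by positivity)
  simp only [Set.mem_ofPred_eq] at hω ⊢
  rw [← sq_abs (S ω)]
  gcongr

end StdGauss


/-- Discrete Remez-type inequality. -/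
lemma interp_bound (K d : ℕ) : ∃ M : ℝ, 0 < M ∧ ∀ (R : Polynomial ℝ), R.natDegree ≤ d →
    ∀ (S : Finset ℕ), S ⊆ Finset.range K → d < S.card → ∀ δ : ℝ, 0 ≤ δ →
    (∀ k ∈ S, |R.eval (k : ℝ)| ≤ δ) → |R.eval 0| ≤ M * δ ∧ |R.eval 1| ≤ M * δ := by
  set b : Finset ℕ → ℕ → ℝ → ℝ := fun S i x =>
    |(Lagrange.basis S (fun k : ℕ => (k : ℝ)) i).eval x| with hb
  have hb0 : ∀ S i x, 0 ≤ b S i x := fun S i x => abs_nonneg _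
  refine ⟨1 + ∑ S ∈ (Finset.range K).powerset, ∑ i ∈ S, (b S i 0 + b S i 1), ?_, ?_⟩
  · have : 0 ≤ ∑ S ∈ (Finset.range K).powerset, ∑ i ∈ S, (b S i 0 + b S i 1) :=
      Finset.sum_nonneg fun S _ => Finset.sum_nonneg fun i _ => add_nonneg (hb0 _ _ _) (hb0 _ _ _)
    linarith
  intro R hR S hS hd δ hδ hk
  have hinj : Set.InjOn (fun k : ℕ => (k : ℝ)) S := Nat.cast_injective.injOn
  have hdeg : R.degree < S.card :=
    lt_of_le_of_lt Polynomial.degree_le_natDegree (by exact_mod_cast lt_of_le_of_lt hR hd)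
  have hx : ∀ x : ℝ, |R.eval x| ≤ (∑ i ∈ S, b S i x) * δ := by
    intro x
    have e : R.eval x = ∑ i ∈ S, R.eval (i : ℝ) *
        (Lagrange.basis S (fun k : ℕ => (k : ℝ)) i).eval x := by
      conv_lhs => rw [Lagrange.eq_interpolate hinj hdeg]
      simp [Lagrange.interpolate_apply, Polynomial.eval_finsetSum]
    rw [e, Finset.sum_mul]
    refine (Finset.abs_sum_le_sum_abs _ _).trans (Finset.sum_le_sum fun i hi => ?_)
    rw [abs_mul, mul_comm]
    exact mul_le_mul_of_nonneg_left (hk i hi) (abs_nonneg _)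
  have hS' : ∑ i ∈ S, (b S i 0 + b S i 1) ≤
      ∑ S ∈ (Finset.range K).powerset, ∑ i ∈ S, (b S i 0 + b S i 1) :=
    Finset.single_le_sum (f := fun S => ∑ i ∈ S, (b S i 0 + b S i 1))
      (fun S _ => Finset.sum_nonneg fun i _ => add_nonneg (hb0 _ _ _) (hb0 _ _ _))
      (Finset.mem_powerset.2 hS)
  rw [Finset.sum_add_distrib] at hS'
  have h0 : 0 ≤ ∑ i ∈ S, b S i 0 := Finset.sum_nonneg fun i _ => hb0 _ _ _
  have h1 : 0 ≤ ∑ i ∈ S, b S i 1 := Finset.sum_nonneg fun i _ => hb0 _ _ _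
  exact ⟨(hx 0).trans (mul_le_mul_of_nonneg_right (by linarith) hδ),
    (hx 1).trans (mul_le_mul_of_nonneg_right (by linarith) hδ)⟩

/-- Polynomial in `t` representing `(1+t^2)^q H_q(cos θ y + sin θ z)` with `θ = 2 arctan t`. -/
noncomputable def rotPoly (q : ℕ) (y z : ℝ) : Polynomial ℝ :=
  ∑ j ∈ Finset.range (q + 1), Polynomial.C ((hm q).coeff j) *
    (Polynomial.C y * (1 - Polynomial.X ^ 2) + Polynomial.C z * (2 * Polynomial.X)) ^ j *
    (1 + Polynomial.X ^ 2) ^ (q - j)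

lemma hm_natDegree (q : ℕ) : (hm q).natDegree ≤ q := by
  unfold hm
  exact Polynomial.natDegree_map_le.trans (Polynomial.natDegree_hermite (n := q)).le

lemma rotPoly_natDegree (q : ℕ) (y z : ℝ) : (rotPoly q y z).natDegree ≤ 2 * q := by
  unfold rotPoly
  refine Polynomial.natDegree_sum_le_of_forall_le _ _ fun j hj => ?_
  have hj' : j ≤ q := by simpa [Nat.lt_succ_iff] using hj
  have h1 : (Polynomial.C y * (1 - Polynomial.X ^ 2) +
      Polynomial.C z * (2 * Polynomial.X) : Polynomial ℝ).natDegree ≤ 2 := by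
    compute_degree
  have h2 : (1 + Polynomial.X ^ 2 : Polynomial ℝ).natDegree ≤ 2 := by compute_degree
  calc _ ≤ (0 + j * 2) + (q - j) * 2 := by
        refine Polynomial.natDegree_mul_le.trans (add_le_add (Polynomial.natDegree_mul_le.trans
          (add_le_add (by simp) ?_)) ?_)
        · exact Polynomial.natDegree_pow_le.trans (Nat.mul_le_mul_left _ h1)
        · exact Polynomial.natDegree_pow_le.trans (Nat.mul_le_mul_left _ h2)
    _ = 2 * q := by omega

lemma rotPoly_eval (q : ℕ) (y z t : ℝ) : (rotPoly q y z).eval t =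
    (1 + t ^ 2) ^ q * (hm q).eval ((1 - t ^ 2) / (1 + t ^ 2) * y + 2 * t / (1 + t ^ 2) * z) := by
  have hpos : (1 + t ^ 2) ≠ 0 := by positivity
  rw [Polynomial.eval_eq_sum_range' (Nat.lt_succ_of_le (hm_natDegree q)), Finset.mul_sum]
  simp only [rotPoly, Polynomial.eval_finsetSum]
  refine Finset.sum_congr rfl fun j hj => ?_
  have hj' : j ≤ q := by simpa [Nat.lt_succ_iff] using hj
  have e : (1 - t ^ 2) / (1 + t ^ 2) * y + 2 * t / (1 + t ^ 2) * z =
      (y * (1 - t ^ 2) + z * (2 * t)) / (1 + t ^ 2) := by field_simp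
  rw [e, div_pow]
  have e2 : (1 + t ^ 2) ^ q = (1 + t ^ 2) ^ (q - j) * (1 + t ^ 2) ^ j := by
    rw [← pow_add]; congr 1; omega
  rw [e2]
  simp
  field_simp

lemma cos_two_arctan (t : ℝ) : cos (2 * arctan t) = (1 - t ^ 2) / (1 + t ^ 2) := by
  rw [cos_two_mul, cos_sq_arctan]
  have hpos : (1 + t ^ 2) ≠ 0 := by positivity
  field_simp; ring

lemma sin_two_arctan (t : ℝ) : sin (2 * arctan t) = 2 * t / (1 + t ^ 2) := by
  have hpos : (1 + t ^ 2) ≠ 0 := by positivity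
  have h2 : √(1 + t ^ 2) * √(1 + t ^ 2) = 1 + t ^ 2 := Real.mul_self_sqrt (by positivity)
  have h3 : √(1 + t ^ 2) ≠ 0 := by positivity
  rw [sin_two_mul, sin_arctan, cos_arctan]
  calc 2 * (t / √(1 + t ^ 2)) * (1 / √(1 + t ^ 2)) = 2 * t / (√(1 + t ^ 2) * √(1 + t ^ 2)) := by
        field_simp
    _ = _ := by rw [h2]

namespace StdGauss
variable {Ω : Type*} [MeasurableSpace Ω] {P : Measure Ω}
    [IsProbabilityMeasure P]

/-- Sum of Hermite polynomials of coordinates. -/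
noncomputable def _root_.hF (q : ℕ) {n : ℕ} (x : Fin n → ℝ) : ℝ := ∑ k, (hm q).eval (x k)

lemma _root_.measurable_hF (q : ℕ) {n : ℕ} : Measurable (hF q (n := n)) := by
  unfold hF
  exact Finset.measurable_sum _ fun k _ =>
    (hm q).continuous.measurable.comp (measurable_pi_apply k)

lemma rot_invariant {n : ℕ} (μ : Measure (Fin n → ℝ)) [IsGaussian μ] (h0 : μ[id] = 0) (θ : ℝ) :
    (μ.prod μ).map (fun y => cos θ • y.1 + sin θ • y.2) = μ := by
  have h1 := IsGaussian.map_rotation_eq_self h0 θ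
  have h2 := congrArg (fun m => Measure.map Prod.fst m) h1
  simp only [Measure.map_fst_prod, measure_univ, one_smul] at h2
  rw [Measure.map_map measurable_fst (by fun_prop)] at h2
  convert h2 using 2
  ext y i
  simp [ContinuousLinearMap.rotation_apply]

lemma small_ball_step (q K : ℕ) (hK : 0 < K) : ∃ M : ℝ, 0 < M ∧ ∀ (n : ℕ) (X : Fin n → Ω → ℝ)
    (ρ : Fin n → Fin n → ℝ), StdGauss P X ρ → ∀ δ : ℝ, 0 ≤ δ →
    P.real {ω | |hsum q X ω| ≤ δ} ≤ 2 * q / K + P.real {ω | |hsum q X ω| ≤ M * δ} ^ 2 := by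
  obtain ⟨M, hM0, hM⟩ := interp_bound K (2 * q)
  refine ⟨M * (1 + (K : ℝ) ^ 2) ^ q, by positivity, fun n X ρ h δ hδ => ?_⟩
  set μ : Measure (Fin n → ℝ) := P.map (fun ω i => X i ω) with hμ
  have hXm : Measurable (fun ω i => X i ω) := measurable_pi_lambda _ h.meas
  have hG : IsGaussian μ := h.gauss.isGaussian_map
  have hμ0 : μ[id] = 0 := by
    rw [hμ, integral_map hXm.aemeasurable (by fun_prop)]
    ext i
    rw [eval_integral]
    · simpa using h.mean i
    · exact fun i => (h.allLp i).integrable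
  set M' := M * (1 + (K : ℝ) ^ 2) ^ q with hM'
  have hset : ∀ r : ℝ, MeasurableSet {x : Fin n → ℝ | |hF q x| ≤ r} := fun r =>
    measurableSet_le (measurable_hF q).abs measurable_const
  have hp : ∀ r : ℝ, P.real {ω | |hsum q X ω| ≤ r} = μ.real {x | |hF q x| ≤ r} := by
    intro r
    rw [hμ, map_measureReal_apply hXm (hset r)]
    rfl
  rw [hp, hp]
  set A : Set (Fin n → ℝ) := {x | |hF q x| ≤ δ} with hA
  set A' : Set (Fin n → ℝ) := {x | |hF q x| ≤ M' * δ} with hA'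
  let R : ℕ → (Fin n → ℝ) × (Fin n → ℝ) → (Fin n → ℝ) := fun k y =>
    cos (2 * arctan k) • y.1 + sin (2 * arctan k) • y.2
  have hRm : ∀ k, Measurable (R k) := fun k => by fun_prop
  have hRA : ∀ k, (μ.prod μ).real (R k ⁻¹' A) = μ.real A := by
    intro k
    rw [← map_measureReal_apply (hRm k) (hset δ), rot_invariant μ hμ0]
  have hcount : ∀ y, ∑ k ∈ Finset.range K, (R k ⁻¹' A).indicator (fun _ => (1 : ℝ)) y ≤
      2 * q + K * (A' ×ˢ A').indicator (fun _ => (1 : ℝ)) y := by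
    intro y
    classical
    set S := (Finset.range K).filter (fun k => R k y ∈ A) with hS
    have hsum : ∑ k ∈ Finset.range K, (R k ⁻¹' A).indicator (fun _ => (1 : ℝ)) y = S.card := by
      simp [Set.indicator_apply, hS]
    rw [hsum]
    by_cases hc : 2 * q < S.card
    · set Q : Polynomial ℝ := ∑ i, rotPoly q (y.1 i) (y.2 i) with hQ
      have hQe : ∀ t : ℝ, Q.eval t = (1 + t ^ 2) ^ q *
          hF q (cos (2 * arctan t) • y.1 + sin (2 * arctan t) • y.2) := by
        intro t
        simp only [hQ, Polynomial.eval_finsetSum, rotPoly_eval, hF, Finset.mul_sum,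
          cos_two_arctan, sin_two_arctan]
        rfl
      have hQd : Q.natDegree ≤ 2 * q :=
        Polynomial.natDegree_sum_le_of_forall_le _ _ fun i _ => rotPoly_natDegree _ _ _
      obtain ⟨q0, q1⟩ := hM Q hQd S (Finset.filter_subset _ _) hc ((1 + (K : ℝ) ^ 2) ^ q * δ)
        (by positivity) (by
          intro k hk
          rw [hS, Finset.mem_filter] at hk
          have hkK : (k : ℝ) ≤ K := by exact_mod_cast (Finset.mem_range.1 hk.1).le
          rw [hQe, abs_mul, abs_of_nonneg (by positivity)]
          exact mul_le_mul (by gcongr) hk.2 (abs_nonneg _) (by positivity))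
      rw [hQe] at q0 q1
      have hy1 : y.1 ∈ A' := by
        simp only [hA', Set.mem_ofPred_eq, hM']
        simpa [mul_assoc] using q0
      have hy2 : y.2 ∈ A' := by
        simp only [hA', Set.mem_ofPred_eq, hM']
        rw [cos_two_arctan, sin_two_arctan, abs_mul, abs_of_nonneg (by positivity)] at q1
        norm_num at q1
        have : (1 : ℝ) ≤ 2 ^ q := one_le_pow₀ (by norm_num)
        rw [mul_assoc]
        refine le_trans ?_ q1
        exact le_mul_of_one_le_left (abs_nonneg _) this
      have hcK : (S.card : ℝ) ≤ K := by
        have := Finset.card_filter_le (Finset.range K) (fun k => R k y ∈ A)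
        rw [Finset.card_range] at this
        exact_mod_cast this
      have : (A' ×ˢ A').indicator (fun _ => (1 : ℝ)) y = 1 := by
        rw [Set.indicator_of_mem]
        exact ⟨hy1, hy2⟩
      rw [this]
      have : (0 : ℝ) ≤ 2 * q := by positivity
      linarith
    · have h1 : (S.card : ℝ) ≤ 2 * q := by exact_mod_cast not_lt.1 hc
      have h2 : 0 ≤ (K : ℝ) * (A' ×ˢ A').indicator (fun _ => (1 : ℝ)) y :=
        mul_nonneg (by positivity) (Set.indicator_nonneg (fun _ _ => zero_le_one) _)
      linarith
  have hm1 : ∀ k, MeasurableSet (R k ⁻¹' A) := fun k => hRm k (hset δ)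
  have hm2 : MeasurableSet (A' ×ˢ A') := (hset _).prod (hset _)
  have hi1 : ∀ k, Integrable ((R k ⁻¹' A).indicator (fun _ => (1 : ℝ))) (μ.prod μ) :=
    fun k => (integrable_const _).indicator (hm1 k)
  have hi2 : Integrable ((A' ×ˢ A').indicator (fun _ => (1 : ℝ))) (μ.prod μ) :=
    (integrable_const _).indicator hm2
  have hintg := integral_mono (integrable_finsetSum (Finset.range K) fun k _ => hi1 k)
    ((integrable_const (2 * q : ℝ)).add (hi2.const_mul (K : ℝ))) hcount
  rw [integral_finsetSum _ fun k _ => hi1 k, integral_add' (integrable_const _)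
    (hi2.const_mul _), integral_const_mul] at hintg
  simp only [integral_indicator (hm1 _), integral_indicator hm2, integral_const, smul_eq_mul,
    integral_const_mul, mul_one, measureReal_restrict_apply_univ, probReal_univ, hRA, Finset.sum_const,
    Finset.card_range, nsmul_eq_mul, one_mul, measureReal_prod_prod] at hintg
  have hKpos : (0 : ℝ) < K := by exact_mod_cast hK
  calc μ.real A = K * μ.real A / K := by field_simp
    _ ≤ (2 * q + K * (μ.real A' * μ.real A')) / K := by gcongr
    _ = _ := by field_simp

end StdGauss

/-- Bootstrapping the small ball estimate. -/
lemma small_ball_bootstrap (p : ℕ → ℝ → ℝ) (q : ℕ) (hp0 : ∀ n δ, 0 ≤ p n δ)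
    (hstep : ∀ K : ℕ, 0 < K → ∃ M : ℝ, 0 < M ∧ ∀ n δ, 0 ≤ δ →
      p n δ ≤ 2 * q / K + p n (M * δ) ^ 2)
    (d c : ℝ) (hd : 0 < d) (hc : 0 < c) (hinit : ∀ n, p n d ≤ 1 - c) (τ : ℝ) (hτ : 0 < τ) :
    ∃ δ, 0 < δ ∧ ∀ n, p n δ ≤ τ := by
  set U : Set ℝ := {u | ∃ δ, 0 < δ ∧ ∀ n, p n δ ≤ u} with hU
  have hne : (1 - c) ∈ U := ⟨d, hd, hinit⟩
  have hbdd : BddBelow U := ⟨0, fun u ⟨δ, _, h⟩ => (hp0 0 δ).trans (h 0)⟩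
  have hU0 : ∀ u ∈ U, 0 ≤ u := fun u ⟨δ, _, h⟩ => (hp0 0 δ).trans (h 0)
  set L := sInf U with hL
  have hL0 : 0 ≤ L := le_csInf ⟨_, hne⟩ hU0
  have hL1 : L ≤ 1 - c := csInf_le hbdd hne
  have hsq : ∀ u ∈ U, L ≤ u ^ 2 := by
    intro u hu
    have hK : ∀ K : ℕ, 0 < K → L ≤ 2 * q / K + u ^ 2 := by
      intro K hK
      obtain ⟨M, hM, hst⟩ := hstep K hK
      obtain ⟨δ, hδ, hδu⟩ := hu
      refine csInf_le hbdd ⟨δ / M, by positivity, fun n => (hst n _ (by positivity)).trans ?_⟩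
      rw [mul_div_cancel₀ _ hM.ne']
      have := hp0 n δ
      gcongr
      exact hδu n
    have ht : Tendsto (fun K : ℕ => 2 * q / (K : ℝ) + u ^ 2) atTop (𝓝 (0 + u ^ 2)) :=
      (tendsto_const_div_atTop_nhds_zero_nat _).add_const _
    rw [zero_add] at ht
    exact ge_of_tendsto ht ((eventually_gt_atTop 0).mono hK)
  have hLL : L ≤ L ^ 2 := by
    have ht : Tendsto (fun e : ℝ => (L + e) ^ 2) (𝓝[>] 0) (𝓝 ((L + 0) ^ 2)) := by
      have : Continuous (fun e : ℝ => (L + e) ^ 2) := by fun_prop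
      exact this.continuousAt.tendsto.mono_left nhdsWithin_le_nhds
    rw [add_zero] at ht
    refine ge_of_tendsto ht (eventually_mem_nhdsWithin.mono fun e he => ?_)
    have he' : (0 : ℝ) < e := he
    obtain ⟨u, hu, hlt⟩ := exists_lt_of_csInf_lt ⟨_, hne⟩ (show sInf U < L + e by linarith)
    have h0 := hU0 u hu
    exact (hsq u hu).trans (by gcongr)
  have hLz : L = 0 := by nlinarith
  obtain ⟨u, ⟨δ, hδ, hu⟩, hlt⟩ := exists_lt_of_csInf_lt ⟨_, hne⟩ (show sInf U < τ by linarith)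
  exact ⟨δ, hδ, fun n => (hu n).trans hlt.le⟩


/-- Correlation of fractional Gaussian noise. -/
noncomputable def fgn (H : ℝ) (j : ℤ) : ℝ :=
  (|(j : ℝ) + 1| ^ (2 * H) + |(j : ℝ) - 1| ^ (2 * H) - 2 * |(j : ℝ)| ^ (2 * H)) / 2

lemma fgn_neg (H : ℝ) (j : ℤ) : fgn H (-j) = fgn H j := by
  unfold fgn
  push_cast
  rw [abs_neg, show -(j : ℝ) + 1 = -((j : ℝ) - 1) by ring,
    show -(j : ℝ) - 1 = -((j : ℝ) + 1) by ring, abs_neg, abs_neg]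
  ring

lemma fgn_zero {H : ℝ} (hH : 0 < H) : fgn H 0 = 1 := by
  unfold fgn
  simp [Real.zero_rpow (show 2 * H ≠ 0 by positivity)]

lemma fgn_succ (H : ℝ) (j : ℕ) : fgn H ((j : ℤ) + 1) =
    (((j : ℝ) + 2) ^ (2 * H) + (j : ℝ) ^ (2 * H) - 2 * ((j : ℝ) + 1) ^ (2 * H)) / 2 := by
  unfold fgn
  push_cast
  rw [show (j : ℝ) + 1 + 1 = j + 2 by ring, show (j : ℝ) + 1 - 1 = j by ring,
    abs_of_nonneg (show (0 : ℝ) ≤ j + 2 by positivity),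
    abs_of_nonneg (show (0 : ℝ) ≤ j by positivity),
    abs_of_nonneg (show (0 : ℝ) ≤ (j : ℝ) + 1 by positivity)]

lemma fgn_succ_nonneg {H : ℝ} (hH : 1 / 2 ≤ H) (j : ℕ) : 0 ≤ fgn H ((j : ℤ) + 1) := by
  rw [fgn_succ]
  have hc := convexOn_rpow (show 1 ≤ 2 * H by linarith)
  have := hc.2 (show (j : ℝ) ∈ Set.Ici 0 by simp) (show (j : ℝ) + 2 ∈ Set.Ici 0 by
    simp only [Set.mem_Ici]; positivity) (show (0 : ℝ) ≤ 1 / 2 by norm_num)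
    (show (0 : ℝ) ≤ 1 / 2 by norm_num) (by norm_num)
  simp only [smul_eq_mul] at this
  rw [show 1 / 2 * (j : ℝ) + 1 / 2 * (j + 2) = j + 1 by ring] at this
  linarith

lemma fgn_succ_nonpos {H : ℝ} (hH0 : 0 < H) (hH : H ≤ 1 / 2) (j : ℕ) :
    fgn H ((j : ℤ) + 1) ≤ 0 := by
  rw [fgn_succ]
  have hc := Real.concaveOn_rpow (show 0 ≤ 2 * H by linarith) (show 2 * H ≤ 1 by linarith)
  have := hc.2 (show (j : ℝ) ∈ Set.Ici 0 by simp) (show (j : ℝ) + 2 ∈ Set.Ici 0 by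
    simp only [Set.mem_Ici]; positivity) (show (0 : ℝ) ≤ 1 / 2 by norm_num)
    (show (0 : ℝ) ≤ 1 / 2 by norm_num) (by norm_num)
  simp only [smul_eq_mul] at this
  rw [show 1 / 2 * (j : ℝ) + 1 / 2 * (j + 2) = j + 1 by ring] at this
  linarith

lemma fgn_sum (H : ℝ) (hH : 0 < H) (N : ℕ) : ∑ j ∈ Finset.range N, fgn H ((j : ℤ) + 1) =
    (((N : ℝ) + 1) ^ (2 * H) - (N : ℝ) ^ (2 * H) - 1) / 2 := by
  induction N with
  | zero => simp [Real.zero_rpow (show 2 * H ≠ 0 by positivity)]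
  | succ N ih =>
    rw [Finset.sum_range_succ, ih, fgn_succ]
    push_cast
    rw [show (N : ℝ) + 1 + 1 = N + 2 by ring]
    ring

lemma fgn_abs_sum {H : ℝ} (hH0 : 0 < H) (hH : H ≤ 1 / 2) (N : ℕ) :
    ∑ j ∈ Finset.range N, |fgn H ((j : ℤ) + 1)| ≤ 1 / 2 := by
  have : ∑ j ∈ Finset.range N, |fgn H ((j : ℤ) + 1)| =
      - ∑ j ∈ Finset.range N, fgn H ((j : ℤ) + 1) := by
    rw [← Finset.sum_neg_distrib]
    exact Finset.sum_congr rfl fun j _ => abs_of_nonpos (fgn_succ_nonpos hH0 hH j)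
  rw [this, fgn_sum H hH0]
  have : (N : ℝ) ^ (2 * H) ≤ ((N : ℝ) + 1) ^ (2 * H) :=
    Real.rpow_le_rpow (by positivity) (by linarith) (by linarith)
  linarith

lemma fgn_abs_le_half {H : ℝ} (hH0 : 0 < H) (hH : H ≤ 1 / 2) (j : ℕ) :
    |fgn H ((j : ℤ) + 1)| ≤ 1 / 2 :=
  (Finset.single_le_sum (f := fun j : ℕ => |fgn H ((j : ℤ) + 1)|) (fun _ _ => abs_nonneg _)
    (Finset.mem_range.2 (Nat.lt_succ_self j))).trans (fgn_abs_sum hH0 hH (j + 1))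

lemma row_le (g : ℤ → ℝ) (hev : ∀ j, g (-j) = g j) (S : ℝ)
    (hS : ∀ N : ℕ, ∑ j ∈ Finset.range N, g ((j : ℤ) + 1) ≤ S) (n k : ℕ) (hk : k < n) :
    ∑ l ∈ Finset.range n, g ((k : ℤ) - l) ≤ g 0 + 2 * S := by
  obtain ⟨m, rfl⟩ : ∃ m, n = (k + 1) + m := ⟨n - (k + 1), by omega⟩
  rw [Finset.sum_range_add]
  have h1 : ∑ l ∈ Finset.range (k + 1), g ((k : ℤ) - l) =
      ∑ l ∈ Finset.range (k + 1), g (l : ℤ) := by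
    rw [← Finset.sum_range_reflect]
    refine Finset.sum_congr rfl fun j hj => ?_
    have : j ≤ k := by simpa [Nat.lt_succ_iff] using hj
    congr 1
    omega
  have h2 : ∑ l ∈ Finset.range m, g ((k : ℤ) - ((k + 1 + l : ℕ) : ℤ)) =
      ∑ l ∈ Finset.range m, g ((l : ℤ) + 1) := by
    refine Finset.sum_congr rfl fun j hj => ?_
    rw [← hev]
    congr 1
    push_cast
    ring
  rw [h1, h2, Finset.sum_range_succ']
  have := hS k
  have := hS m
  push_cast at *
  linarith

lemma rpow_diff_bound (b : ℝ) (hb : b < 1) (x : ℝ) (hx : 1 ≤ x) :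
    |(x + 1) ^ b - x ^ b| ≤ |b| * x ^ (b - 1) := by
  have hd : ∀ y : ℝ, x ≤ y → HasDerivAt (fun y : ℝ => y ^ b) (b * y ^ (b - 1)) y := fun y hy =>
    Real.hasDerivAt_rpow_const (Or.inl (show y ≠ 0 by linarith))
  obtain ⟨c, hc, he⟩ := exists_hasDerivAt_eq_slope (fun y : ℝ => y ^ b)
    (fun y => b * y ^ (b - 1)) (show x < x + 1 by linarith)
    (fun y hy => (hd y hy.1).continuousAt.continuousWithinAt)
    (fun y hy => hd y hy.1.le)
  rw [add_sub_cancel_left, div_one] at he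
  rw [← he, abs_mul, abs_of_nonneg (Real.rpow_nonneg (by linarith [hc.1]) _)]
  exact mul_le_mul_of_nonneg_left
    (Real.rpow_le_rpow_of_nonpos (by linarith) hc.1.le (by linarith)) (abs_nonneg _)

lemma fgn_bound {H : ℝ} (hH0 : 0 < H) (hH : H < 1) (j : ℕ) (hj : 1 ≤ j) :
    |fgn H ((j : ℤ) + 1)| ≤ (j : ℝ) ^ (2 * H - 2) := by
  rw [fgn_succ]
  have hj' : (1 : ℝ) ≤ j := by exact_mod_cast hj
  have hd : ∀ y : ℝ, (j : ℝ) ≤ y → HasDerivAt (fun y : ℝ => (y + 1) ^ (2 * H) - y ^ (2 * H))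
      (2 * H * ((y + 1) ^ (2 * H - 1) - y ^ (2 * H - 1))) y := by
    intro y hy
    have h1 := (Real.hasDerivAt_rpow_const (p := 2 * H)
      (Or.inl (show y + 1 ≠ 0 by linarith))).comp_add_const y 1
    have h2 := Real.hasDerivAt_rpow_const (p := 2 * H) (Or.inl (show y ≠ 0 by linarith))
    exact (h1.sub h2).congr_deriv (by ring)
  obtain ⟨c, hc, he⟩ := exists_hasDerivAt_eq_slope _ _ (show (j : ℝ) < j + 1 by linarith)
    (fun y hy => (hd y hy.1).continuousAt.continuousWithinAt)
    (fun y hy => hd y hy.1.le)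
  rw [add_sub_cancel_left, div_one] at he
  have e : ((j : ℝ) + 2) ^ (2 * H) + (j : ℝ) ^ (2 * H) - 2 * ((j : ℝ) + 1) ^ (2 * H) =
      2 * H * ((c + 1) ^ (2 * H - 1) - c ^ (2 * H - 1)) := by
    rw [he, show (j : ℝ) + 1 + 1 = j + 2 by ring]; ring
  rw [e, abs_div, abs_mul, abs_of_pos (show 0 < 2 * H by linarith), abs_two]
  have h1 := rpow_diff_bound (2 * H - 1) (by linarith) c (by linarith [hc.1])
  rw [show 2 * H - 1 - 1 = 2 * H - 2 by ring] at h1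
  have h2 : c ^ (2 * H - 2) ≤ (j : ℝ) ^ (2 * H - 2) :=
    Real.rpow_le_rpow_of_nonpos (by linarith) hc.1.le (by linarith)
  have h3 : |2 * H - 1| ≤ 1 := by rw [abs_le]; constructor <;> linarith
  have h4 : 0 ≤ c ^ (2 * H - 2) := Real.rpow_nonneg (by linarith [hc.1]) _
  have h5 : |(c + 1) ^ (2 * H - 1) - c ^ (2 * H - 1)| ≤ (j : ℝ) ^ (2 * H - 2) := by
    nlinarith
  have h6 := abs_nonneg ((c + 1) ^ (2 * H - 1) - c ^ (2 * H - 1))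
  nlinarith

lemma fgn_summable {H : ℝ} {q : ℕ} (hq : 2 ≤ q) (hH0 : 0 < H) (hH1 : H < 1 - 1 / (2 * q)) :
    Summable (fun j : ℕ => |fgn H ((j : ℤ) + 1)| ^ q) := by
  have hq' : (2 : ℝ) ≤ q := by exact_mod_cast hq
  have hq0 : (0 : ℝ) < 1 / (2 * q) := by positivity
  have hH : H < 1 := by linarith
  rw [← summable_nat_add_iff 1]
  have hs : Summable (fun j : ℕ => (((j + 1 : ℕ) : ℝ)) ^ ((2 * H - 2) * q)) := by
    rw [summable_nat_add_iff 1 (f := fun j : ℕ => (j : ℝ) ^ ((2 * H - 2) * q)),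
      Real.summable_nat_rpow]
    have : H * (2 * q) < (1 - 1 / (2 * q)) * (2 * q) :=
      mul_lt_mul_of_pos_right hH1 (by positivity)
    rw [sub_mul, one_div, inv_mul_cancel₀ (by positivity)] at this
    linarith
  refine Summable.of_nonneg_of_le (fun _ => by positivity) (fun j => ?_) hs
  rw [Real.rpow_mul (by positivity), Real.rpow_natCast]
  gcongr
  exact fgn_bound hH0 hH (j + 1) (by omega)

/-- Upper bound for the rows. -/
lemma fgn_upper {H : ℝ} {q : ℕ} (hq : 2 ≤ q) (hH0 : 0 < H) (hH1 : H < 1 - 1 / (2 * q)) :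
    ∃ C : ℝ, 0 < C ∧ ∀ n : ℕ,
      ∑ k : Fin n, ∑ l : Fin n, |fgn H ((k : ℤ) - (l : ℤ))| ^ q ≤ C * n := by
  have hs := fgn_summable hq hH0 hH1
  set T := ∑' j : ℕ, |fgn H ((j : ℤ) + 1)| ^ q with hT
  have hT0 : 0 ≤ T := tsum_nonneg fun _ => by positivity
  refine ⟨1 + 2 * T, by positivity, fun n => ?_⟩
  have : ∀ k : Fin n, ∑ l : Fin n, |fgn H ((k : ℤ) - (l : ℤ))| ^ q ≤ 1 + 2 * T := by
    intro k
    rw [Fin.sum_univ_eq_sum_range (fun l : ℕ => |fgn H ((k : ℤ) - (l : ℤ))| ^ q) n]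
    have := row_le (fun j => |fgn H j| ^ q) (fun j => by simp [fgn_neg]) T
      (fun N => hs.sum_le_tsum _ fun _ _ => by positivity) n k k.2
    simpa [fgn_zero hH0] using this
  refine (Finset.sum_le_sum fun k _ => this k).trans (le_of_eq ?_)
  simp only [Finset.sum_const, Finset.card_univ, Fintype.card_fin, nsmul_eq_mul]
  ring

/-- Lower bound for the rows. -/
lemma fgn_lower {H : ℝ} {q : ℕ} (hq : 2 ≤ q) (hH0 : 0 < H) (n : ℕ) :
    1 / 2 * (n : ℝ) ≤ ∑ k : Fin n, ∑ l : Fin n, fgn H ((k : ℤ) - (l : ℤ)) ^ q := by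
  have : ∀ k : Fin n, 1 / 2 ≤ ∑ l : Fin n, fgn H ((k : ℤ) - (l : ℤ)) ^ q := by
    intro k
    rw [Fin.sum_univ_eq_sum_range (fun l : ℕ => fgn H ((k : ℤ) - (l : ℤ)) ^ q) n]
    have := row_le (fun j => - fgn H j ^ q) (fun j => by simp [fgn_neg]) (1 / 4)
      (fun N => ?_) n k k.2
    · simp only [Finset.sum_neg_distrib, fgn_zero hH0] at this
      norm_num at this ⊢
      linarith
    · rcases le_total (1 / 2) H with h | h
      · refine (Finset.sum_nonpos fun j _ => ?_).trans (by norm_num)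
        have := fgn_succ_nonneg h j
        simp only [Left.neg_nonpos_iff]
        positivity
      · have h2 := fgn_abs_sum hH0 h N
        calc ∑ j ∈ Finset.range N, - fgn H ((j : ℤ) + 1) ^ q
            ≤ ∑ j ∈ Finset.range N, 1 / 2 * |fgn H ((j : ℤ) + 1)| := by
              refine Finset.sum_le_sum fun j _ => ?_
              have h3 := fgn_abs_le_half hH0 h j
              have h0 := abs_nonneg (fgn H ((j : ℤ) + 1))
              calc - fgn H ((j : ℤ) + 1) ^ q ≤ |fgn H ((j : ℤ) + 1) ^ q| := neg_le_abs _
                _ = |fgn H ((j : ℤ) + 1)| ^ q := abs_pow _ _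
                _ ≤ |fgn H ((j : ℤ) + 1)| ^ 2 :=
                  pow_le_pow_of_le_one h0 (by linarith) hq
                _ ≤ _ := by nlinarith
          _ ≤ 1 / 4 := by rw [← Finset.mul_sum]; linarith
  have h := Finset.sum_le_sum fun (k : Fin n) (_ : k ∈ Finset.univ) => this k
  refine le_trans (le_of_eq ?_) h
  simp [mul_comm]


section fbm
variable {Ω : Type*} [MeasureSpace Ω] [IsProbabilityMeasure (ℙ : Measure Ω)]

/-- Normalized increments. -/
noncomputable def fbmInc (B : ℝ → Ω → ℝ) (H : ℝ) (n : ℕ) (k : Fin n) (ω : Ω) : ℝ :=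
  (n : ℝ) ^ H * (B (((k : ℝ) + 1) / n) ω - B ((k : ℝ) / n) ω)

lemma hermiteVariation_eq (B : ℝ → Ω → ℝ) (H : ℝ) (q n : ℕ) (ω : Ω) :
    hermiteVariation B H q n ω = hsum q (fbmInc B H n) ω := by
  unfold hermiteVariation hsum
  rw [Finset.sum_range]
  refine Finset.sum_congr rfl fun k _ => ?_
  rw [hm, Polynomial.eval_map, Polynomial.aeval_def]
  rfl

lemma fbm_gauss1 {B : ℝ → Ω → ℝ} {H : ℝ} (hB : IsFractionalBrownianMotion B H) (t : ℝ)
    (ht : 0 ≤ t) : HasGaussianLaw (B t) (ℙ : Measure Ω) ∧ ∫ ω, B t ω = 0 := by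
  obtain ⟨v, hv⟩ := hB.gaussian_fdd 1 (fun _ => t) (fun _ => ht) (fun _ => 1)
  simp only [Finset.univ_unique, one_mul, Finset.sum_const, Finset.card_singleton, one_smul] at hv
  change Measure.map (B t) ℙ = _ at hv
  refine ⟨⟨by rw [hv]; infer_instance⟩, ?_⟩
  have : ∫ x, x ∂(Measure.map (B t) ℙ) = ∫ ω, B t ω :=
    integral_map (hB.measurable t).aemeasurable (by fun_prop)
  rw [← this, hv]
  simp

lemma cov_scale {H : ℝ} (n : ℕ) (hn : 0 < n) (s t : ℝ) (hs : 0 ≤ s) (ht : 0 ≤ t) :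
    ((s / n) ^ (2 * H) + (t / n) ^ (2 * H) - |t / n - s / n| ^ (2 * H)) / 2 =
    (s ^ (2 * H) + t ^ (2 * H) - |t - s| ^ (2 * H)) / 2 / ((n : ℝ) ^ H * (n : ℝ) ^ H) := by
  have hn' : (0 : ℝ) < n := by exact_mod_cast hn
  rw [← sub_div, abs_div, abs_of_pos hn', div_rpow hs hn'.le, div_rpow ht hn'.le,
    div_rpow (abs_nonneg _) hn'.le, ← rpow_add hn', ← two_mul]
  ring

lemma fbm_stdGauss {B : ℝ → Ω → ℝ} {H : ℝ} (hH : 0 < H) (hB : IsFractionalBrownianMotion B H)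
    (n : ℕ) : StdGauss (ℙ : Measure Ω) (fbmInc B H n)
      (fun k l => fgn H ((k : ℤ) - (l : ℤ))) := by
  have hmeas : ∀ k, Measurable (fbmInc B H n k) := fun k =>
    ((hB.measurable _).sub (hB.measurable _)).const_mul _
  have ht0 : ∀ k : ℕ, (0 : ℝ) ≤ ((k : ℝ) + 1) / n := fun k => by positivity
  have ht1 : ∀ k : ℕ, (0 : ℝ) ≤ (k : ℝ) / n := fun k => by positivity
  have hL2 : ∀ t : ℝ, 0 ≤ t → MemLp (B t) 2 (ℙ : Measure Ω) := fun t ht =>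
    (fbm_gauss1 hB t ht).1.memLp (by simp)
  have hintg : ∀ t : ℝ, 0 ≤ t → Integrable (B t) (ℙ : Measure Ω) := fun t ht =>
    (hL2 t ht).integrable (by norm_num)
  refine ⟨hmeas, ⟨?_⟩, ?_, ?_, ?_⟩
  · refine isGaussian_of_map_eq_gaussianReal fun L => ?_
    obtain ⟨v, hv⟩ := hB.gaussian_fdd (n + n)
      (Fin.append (fun k : Fin n => ((k : ℝ) + 1) / n) (fun k : Fin n => (k : ℝ) / n))
      (by
        intro i
        refine Fin.addCases (fun k => ?_) (fun k => ?_) i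
        · simpa using ht0 k
        · rw [Fin.append_right]
          exact ht1 k)
      (Fin.append (fun k : Fin n => L (Pi.single k 1) * (n : ℝ) ^ H)
        (fun k : Fin n => - (L (Pi.single k 1) * (n : ℝ) ^ H)))
    refine ⟨0, v, ?_⟩
    rw [← hv, Measure.map_map (by fun_prop) (measurable_pi_lambda _ hmeas)]
    congr 1
    ext ω
    simp only [Function.comp, Fin.sum_univ_add, Fin.append_left, Fin.append_right]
    have : (fun i => fbmInc B H n i ω) = ∑ i, fbmInc B H n i ω • Pi.single i (1 : ℝ) := by
      ext i
      simp [Finset.sum_apply, Pi.single_apply]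
    rw [this, map_sum, ← Finset.sum_add_distrib]
    refine Finset.sum_congr rfl fun k _ => ?_
    rw [map_smul, smul_eq_mul, fbmInc]
    ring
  · intro k
    unfold fbmInc
    rw [integral_const_mul, integral_sub (hintg _ (ht0 k)) (hintg _ (ht1 k)),
      (fbm_gauss1 hB _ (ht0 k)).2, (fbm_gauss1 hB _ (ht1 k)).2]
    simp
  · intro k l
    have hn : 0 < n := k.pos
    have hn' : (0 : ℝ) < n := by exact_mod_cast hn
    have hi : ∀ s t : ℝ, 0 ≤ s → 0 ≤ t → Integrable (fun ω => B s ω * B t ω) (ℙ : Measure Ω) :=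
      fun s t hs ht => (hL2 s hs).integrable_mul (hL2 t ht)
    have e : ∀ ω, fbmInc B H n k ω * fbmInc B H n l ω = ((n : ℝ) ^ H * (n : ℝ) ^ H) *
        ((B (((k : ℝ) + 1) / n) ω * B (((l : ℝ) + 1) / n) ω
          - B (((k : ℝ) + 1) / n) ω * B ((l : ℝ) / n) ω)
        - (B ((k : ℝ) / n) ω * B (((l : ℝ) + 1) / n) ω
          - B ((k : ℝ) / n) ω * B ((l : ℝ) / n) ω)) := by
      intro ω
      unfold fbmInc
      ring
    simp_rw [e]
    have hi2 : ∀ s t s' t' : ℝ, 0 ≤ s → 0 ≤ t → 0 ≤ s' → 0 ≤ t' →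
        Integrable (fun ω => B s ω * B t ω - B s' ω * B t' ω) (ℙ : Measure Ω) :=
      fun s t s' t' hs ht hs' ht' => (hi s t hs ht).sub (hi s' t' hs' ht')
    rw [integral_const_mul, integral_sub (hi2 _ _ _ _ (ht0 k) (ht0 l) (ht0 k) (ht1 l))
      (hi2 _ _ _ _ (ht1 k) (ht0 l) (ht1 k) (ht1 l)),
      integral_sub (hi _ _ (ht0 k) (ht0 l)) (hi _ _ (ht0 k) (ht1 l)),
      integral_sub (hi _ _ (ht1 k) (ht0 l)) (hi _ _ (ht1 k) (ht1 l)),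
      hB.covariance _ _ (ht0 k) (ht0 l), hB.covariance _ _ (ht0 k) (ht1 l),
      hB.covariance _ _ (ht1 k) (ht0 l), hB.covariance _ _ (ht1 k) (ht1 l),
      cov_scale n hn _ _ (by positivity) (by positivity),
      cov_scale n hn _ _ (by positivity) (by positivity),
      cov_scale n hn _ _ (by positivity) (by positivity),
      cov_scale n hn _ _ (by positivity) (by positivity)]
    have hne : (n : ℝ) ^ H * (n : ℝ) ^ H ≠ 0 := by positivity
    unfold fgn
    push_cast
    rw [show (l : ℝ) + 1 - (k + 1) = -((k : ℝ) - l) by ring,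
      show (l : ℝ) - (k + 1) = -((k : ℝ) - l + 1) by ring,
      show (l : ℝ) + 1 - k = -((k : ℝ) - l - 1) by ring,
      show (l : ℝ) - k = -((k : ℝ) - l) by ring]
    simp only [abs_neg]
    field_simp
    ring
  · intro k
    simp [fgn_zero hH]

end fbm


section fbm
variable {Ω : Type*} [MeasureSpace Ω] [IsProbabilityMeasure (ℙ : Measure Ω)]

lemma fbm_moments (q : ℕ) (hq : 2 ≤ q) (H : ℝ) (hH0 : 0 < H) (hH1 : H < 1 - 1 / (2 * q))
    (B : ℝ → Ω → ℝ) (hB : IsFractionalBrownianMotion B H) :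
    ∃ D E : ℝ, 0 < D ∧ 0 < E ∧ ∀ n : ℕ,
      ∫ ω, hsum q (fbmInc B H n) ω ^ 2 ≤ D * n ∧ 1 / 2 * (n : ℝ) ≤ ∫ ω, hsum q (fbmInc B H n) ω ^ 2
      ∧ ∫ ω, hsum q (fbmInc B H n) ω ^ 4 ≤ E * (n : ℝ) ^ 2 := by
  obtain ⟨C, hC, hCb⟩ := fgn_upper hq hH0 hH1
  obtain ⟨F, hF, hFb⟩ := StdGauss.hsum_four (P := (ℙ : Measure Ω)) q
  have hq1 : (1 : ℝ) ≤ (q.factorial : ℝ) := by exact_mod_cast Nat.one_le_iff_ne_zero.2 q.factorial_ne_zero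
  refine ⟨q.factorial * C, (F + 1) * C ^ 2, by positivity, by positivity, fun n => ?_⟩
  have hs := fbm_stdGauss hH0 hB n
  have hlow := fgn_lower hq hH0 n (H := H) (q := q)
  have hup := hCb n
  have hle : ∑ k : Fin n, ∑ l : Fin n, fgn H ((k : ℤ) - (l : ℤ)) ^ q ≤
      ∑ k : Fin n, ∑ l : Fin n, |fgn H ((k : ℤ) - (l : ℤ))| ^ q :=
    Finset.sum_le_sum fun k _ => Finset.sum_le_sum fun l _ =>
      (le_abs_self _).trans (abs_pow _ _).le
  have hn : (0 : ℝ) ≤ n := by positivity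
  have h0 : 0 ≤ ∑ k : Fin n, ∑ l : Fin n, |fgn H ((k : ℤ) - (l : ℤ))| ^ q :=
    Finset.sum_nonneg fun k _ => Finset.sum_nonneg fun l _ => by positivity
  rw [hs.hsum_sq]
  refine ⟨?_, ?_, ?_⟩
  · rw [mul_assoc]
    exact mul_le_mul_of_nonneg_left (hle.trans hup) (by positivity)
  · nlinarith
  · refine (hFb n _ _ hs).trans ?_
    calc F * (∑ k : Fin n, ∑ l : Fin n, |fgn H ((k : ℤ) - (l : ℤ))| ^ q) ^ 2
        ≤ (F + 1) * (C * n) ^ 2 := by gcongr; linarith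
      _ = _ := by ring

lemma fbm_small_ball (q : ℕ) (hq : 2 ≤ q) (H : ℝ) (hH0 : 0 < H) (hH1 : H < 1 - 1 / (2 * q))
    (B : ℝ → Ω → ℝ) (hB : IsFractionalBrownianMotion B H) (τ : ℝ) (hτ : 0 < τ) :
    ∃ δ, 0 < δ ∧ ∀ m : ℕ,
      (ℙ : Measure Ω).real {ω | |hsum q (fbmInc B H (m + 1)) ω| ≤ δ * √((m : ℝ) + 1)} ≤ τ := by
  obtain ⟨D, E, hD, hE, hb⟩ := fbm_moments q hq H hH0 hH1 B hB
  refine small_ball_bootstrap (fun m δ =>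
    (ℙ : Measure Ω).real {ω | |hsum q (fbmInc B H (m + 1)) ω| ≤ δ * √((m : ℝ) + 1)}) q
    (fun _ _ => measureReal_nonneg) ?_ (1 / 2) (1 / (16 * E)) (by norm_num) (by positivity) ?_ τ hτ
  · intro K hK
    obtain ⟨M, hM, hMb⟩ := StdGauss.small_ball_step (P := (ℙ : Measure Ω)) q K hK
    refine ⟨M, hM, fun n δ hδ => ?_⟩
    have := hMb _ _ _ (fbm_stdGauss hH0 hB (n + 1)) (δ * √((n : ℝ) + 1)) (by positivity)
    simpa only [mul_assoc] using this
  · intro m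
    have hs := fbm_stdGauss hH0 hB (m + 1)
    obtain ⟨-, h2, h4⟩ := hb (m + 1)
    set n : ℝ := (m : ℝ) + 1 with hn
    have hn0 : 0 < n := by positivity
    push_cast at h2 h4
    have hpz := paley_zygmund (hs.hsum_meas q) (hs.hsum_allLp q) (1 / 2 * √n) (1 / (4 * E * n))
      (by positivity) (by positivity)
    rw [mul_pow, sq_sqrt hn0.le] at hpz
    set p := (ℙ : Measure Ω).real {ω | |hsum q (fbmInc B H (m + 1)) ω| ≤ 1 / 2 * √n} with hp
    have h4' : 1 / (4 * E * n) / 2 * ∫ ω, hsum q (fbmInc B H (m + 1)) ω ^ 4 ≤ n / 8 := by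
      calc _ ≤ 1 / (4 * E * n) / 2 * (E * n ^ 2) := by gcongr
        _ = n / 8 := by field_simp; norm_num
    have e : 1 / (2 * (1 / (4 * E * n))) * (1 - p) = n * (2 * E * (1 - p)) := by
      field_simp; norm_num
    rw [e] at hpz
    have h5 : n * (1 / 8) ≤ n * (2 * E * (1 - p)) := by linarith
    have h6 := le_of_mul_le_mul_left h5 hn0
    have h7 : 1 / (16 * E) ≤ 1 - p := by
      rw [div_le_iff₀ (by positivity)]; linarith
    change p ≤ 1 - 1 / (16 * E)
    linarith

end fbm

lemma inv_sq_tail (M : ℕ) (hM : 0 < M) :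
    Summable (fun i : ℕ => 1 / (((i + M : ℕ) : ℝ) + 1) ^ 2) ∧
    ∑' i : ℕ, 1 / (((i + M : ℕ) : ℝ) + 1) ^ 2 ≤ 1 / (M : ℝ) := by
  have hM' : (0 : ℝ) < M := by exact_mod_cast hM
  have hpart : ∀ n : ℕ, ∑ i ∈ Finset.range n, 1 / (((i + M : ℕ) : ℝ) + 1) ^ 2 ≤
      1 / (M : ℝ) - 1 / ((n : ℝ) + M) := by
    intro n
    induction n with
    | zero => simp
    | succ n ih =>
      rw [Finset.sum_range_succ]
      have : 1 / (((n + M : ℕ) : ℝ) + 1) ^ 2 ≤ 1 / ((n : ℝ) + M) - 1 / (((n + 1 : ℕ) : ℝ) + M) := by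
        push_cast
        have e : 1 / ((n : ℝ) + M) - 1 / ((n : ℝ) + 1 + M) =
            1 / (((n : ℝ) + M) * ((n : ℝ) + M + 1)) := by
          field_simp; ring
        rw [e]
        have hx : (0 : ℝ) < n + M := by positivity
        apply one_div_le_one_div_of_le (by positivity)
        nlinarith
      linarith
  have hpart' : ∀ n : ℕ, ∑ i ∈ Finset.range n, 1 / (((i + M : ℕ) : ℝ) + 1) ^ 2 ≤ 1 / (M : ℝ) :=
    fun n => (hpart n).trans (by
      have : 0 ≤ 1 / ((n : ℝ) + M) := by positivity
      linarith)
  have hs := summable_of_sum_range_le (fun i => by positivity) hpart'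
  exact ⟨hs, hs.tsum_le_of_sum_range_le hpart'⟩

lemma harm_eq (M : ℕ) : ∑ i ∈ Finset.range M, 1 / ((i : ℝ) + 1) = (harmonic M : ℝ) := by
  simp [harmonic]

/-- Abstract Spitzer-type asymptotics. -/
lemma spitzer_abstract (f : ℝ → ℕ → ℝ) (D : ℝ) (hD : 0 < D) (h0 : ∀ ε m, 0 ≤ f ε m)
    (h1 : ∀ ε m, f ε m ≤ 1) (h2 : ∀ ε, 0 < ε → ∀ m : ℕ, f ε m ≤ D / (ε ^ 2 * ((m : ℝ) + 1)))
    (h3 : ∀ τ, 0 < τ → ∃ δ, 0 < δ ∧ ∀ ε, 0 < ε → ∀ m : ℕ, ε ^ 2 * ((m : ℝ) + 1) ≤ δ ^ 2 →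
      1 - τ ≤ f ε m) :
    Tendsto (fun ε : ℝ => (1 / (-log ε)) * ∑' n : ℕ, (1 / ((n : ℝ) + 1)) * f ε n)
      (𝓝[>] 0) (𝓝 2) := by
  have hlim : Tendsto (fun ε : ℝ => - log ε) (𝓝[>] 0) atTop :=
    tendsto_neg_atBot_atTop.comp tendsto_log_nhdsGT_zero
  have hC : ∀ C : ℝ, Tendsto (fun ε : ℝ => C / (- log ε)) (𝓝[>] 0) (𝓝 0) :=
    fun C => hlim.const_div_atTop C
  have hev : ∀ᶠ ε : ℝ in 𝓝[>] 0, 0 < ε ∧ ε < 1 :=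
    Ioo_mem_nhdsGT (show (0 : ℝ) < 1 by norm_num)
  have hterm : ∀ ε, 0 < ε → ∀ m : ℕ, 1 / ((m : ℝ) + 1) * f ε m ≤
      D / ε ^ 2 * (1 / ((m : ℝ) + 1) ^ 2) := by
    intro ε hε m
    calc 1 / ((m : ℝ) + 1) * f ε m ≤ 1 / ((m : ℝ) + 1) * (D / (ε ^ 2 * ((m : ℝ) + 1))) := by
          gcongr
          exact h2 ε hε m
      _ = _ := by field_simp
  have hnn : ∀ ε, ∀ m : ℕ, 0 ≤ 1 / ((m : ℝ) + 1) * f ε m := fun ε m =>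
    mul_nonneg (by positivity) (h0 _ _)
  have hsum : ∀ ε, 0 < ε → Summable (fun m : ℕ => 1 / ((m : ℝ) + 1) * f ε m) := by
    intro ε hε
    rw [← summable_nat_add_iff 1]
    refine Summable.of_nonneg_of_le (fun m => hnn ε _) (fun m => hterm ε hε _) ?_
    exact (inv_sq_tail 1 one_pos).1.mul_left _
  have hupper : ∀ ε : ℝ, 0 < ε → ε < 1 → ∑' n : ℕ, (1 / ((n : ℝ) + 1)) * f ε n ≤
      2 * (- log ε) + (1 + log 2 + D) := by
    intro ε hε hε1
    set M := ⌈1 / ε ^ 2⌉₊ with hM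
    have hp : 1 ≤ 1 / ε ^ 2 := by
      rw [le_div_iff₀ (by positivity)]; nlinarith
    have hM1 : 1 / ε ^ 2 ≤ M := Nat.le_ceil _
    have hM2 : (M : ℝ) < 1 / ε ^ 2 + 1 := Nat.ceil_lt_add_one (by positivity)
    have hMr : (0 : ℝ) < M := by linarith
    have hMpos : 0 < M := by exact_mod_cast hMr
    rw [← (hsum ε hε).sum_add_tsum_nat_add M]
    have e1 : ∑ i ∈ Finset.range M, 1 / ((i : ℝ) + 1) * f ε i ≤ 1 + log M := by
      refine le_trans ?_ (harmonic_le_one_add_log M)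
      rw [← harm_eq]
      refine Finset.sum_le_sum fun i _ => mul_le_of_le_one_right (by positivity) (h1 _ _)
    have e2 : ∑' i : ℕ, 1 / (((i + M : ℕ) : ℝ) + 1) * f ε (i + M) ≤ D := by
      obtain ⟨t1, t2⟩ := inv_sq_tail M hMpos
      have hs' := (summable_nat_add_iff M).2 (hsum ε hε)
      calc _ ≤ ∑' i : ℕ, D / ε ^ 2 * (1 / (((i + M : ℕ) : ℝ) + 1) ^ 2) :=
            hs'.tsum_le_tsum (fun i => hterm ε hε _) (t1.mul_left _)
        _ = D / ε ^ 2 * ∑' i : ℕ, (1 / (((i + M : ℕ) : ℝ) + 1) ^ 2) := tsum_mul_left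
        _ ≤ D / ε ^ 2 * (1 / M) := by gcongr
        _ ≤ D / ε ^ 2 * (1 / (1 / ε ^ 2)) := by gcongr
        _ = D := by field_simp
    have e3 : log M ≤ log 2 + 2 * (- log ε) := by
      have : log M ≤ log (2 * (1 / ε ^ 2)) := log_le_log hMr (by linarith)
      rw [log_mul (by norm_num) (by positivity), one_div, log_inv, log_pow] at this
      push_cast at this
      linarith
    linarith
  have hlower : ∀ τ, 0 < τ → τ < 1 → ∃ C : ℝ, ∀ ε : ℝ, 0 < ε → ε < 1 →
      (1 - τ) * (2 * (- log ε)) + C ≤ ∑' n : ℕ, (1 / ((n : ℝ) + 1)) * f ε n := by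
    intro τ hτ hτ1
    obtain ⟨δ, hδ, hf⟩ := h3 τ hτ
    refine ⟨(1 - τ) * (2 * log δ), fun ε hε hε1 => ?_⟩
    set M := ⌊δ ^ 2 / ε ^ 2⌋₊ with hM
    have hM1 : (M : ℝ) ≤ δ ^ 2 / ε ^ 2 := Nat.floor_le (by positivity)
    have hM2 : δ ^ 2 / ε ^ 2 < M + 1 := Nat.lt_floor_add_one _
    have hlog : 2 * log δ + 2 * (- log ε) ≤ log ((M + 1 : ℕ) : ℝ) := by
      have : log (δ ^ 2 / ε ^ 2) ≤ log ((M + 1 : ℕ) : ℝ) :=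
        log_le_log (by positivity) (by push_cast; exact hM2.le)
      rw [log_div (by positivity) (by positivity), log_pow, log_pow] at this
      push_cast at this ⊢
      linarith
    have hh := log_add_one_le_harmonic M
    calc (1 - τ) * (2 * (- log ε)) + (1 - τ) * (2 * log δ)
        = (1 - τ) * (2 * log δ + 2 * (- log ε)) := by ring
      _ ≤ (1 - τ) * (harmonic M : ℝ) :=
          mul_le_mul_of_nonneg_left (hlog.trans hh) (by linarith)
      _ = ∑ i ∈ Finset.range M, 1 / ((i : ℝ) + 1) * (1 - τ) := by
          rw [← harm_eq, Finset.mul_sum]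
          exact Finset.sum_congr rfl fun i _ => mul_comm _ _
      _ ≤ ∑ i ∈ Finset.range M, 1 / ((i : ℝ) + 1) * f ε i := by
          refine Finset.sum_le_sum fun i hi => ?_
          have hi' : (i : ℝ) + 1 ≤ M := by exact_mod_cast Finset.mem_range.1 hi
          refine mul_le_mul_of_nonneg_left (hf ε hε i ?_) (by positivity)
          have := (le_div_iff₀ (by positivity)).1 (hi'.trans hM1)
          linarith
      _ ≤ _ := (hsum ε hε).sum_le_tsum _ fun i _ => hnn ε i
  rw [tendsto_order]
  constructor
  · intro a ha
    obtain ⟨τ, hτ0, hτ1, hτa⟩ : ∃ τ : ℝ, 0 < τ ∧ τ < 1 ∧ a < (1 - τ) * 2 := by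
      refine ⟨min (1 / 2) ((2 - a) / 4), lt_min (by norm_num) (by linarith), ?_, ?_⟩
      · exact (min_le_left _ _).trans_lt (by norm_num)
      · have := min_le_right (1 / 2) ((2 - a) / 4)
        linarith
    obtain ⟨C, hCl⟩ := hlower τ hτ0 hτ1
    have ht : Tendsto (fun ε : ℝ => (1 - τ) * 2 + C / (- log ε)) (𝓝[>] 0)
        (𝓝 ((1 - τ) * 2 + 0)) := (hC C).const_add _
    rw [add_zero] at ht
    filter_upwards [ht.eventually_const_lt hτa, hev, hlim.eventually_gt_atTop 0] with ε h ⟨hε, hε1⟩ hl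
    refine h.trans_le ?_
    rw [one_div, ← div_eq_inv_mul, le_div_iff₀ hl, add_mul, div_mul_cancel₀ _ hl.ne', mul_assoc]
    exact hCl ε hε hε1
  · intro b hb
    have ht : Tendsto (fun ε : ℝ => 2 + (1 + log 2 + D) / (- log ε)) (𝓝[>] 0)
        (𝓝 (2 + 0)) := (hC _).const_add _
    rw [add_zero] at ht
    filter_upwards [ht.eventually_lt_const hb, hev, hlim.eventually_gt_atTop 0] with ε h ⟨hε, hε1⟩ hl
    refine lt_of_le_of_lt ?_ h
    rw [one_div, ← div_eq_inv_mul, div_le_iff₀ hl, add_mul, div_mul_cancel₀ _ hl.ne']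
    exact hupper ε hε hε1

theorem stmt_6 {Ω : Type*} [MeasureSpace Ω] [IsProbabilityMeasure (ℙ : Measure Ω)]
    (q : ℕ) (hq : 2 ≤ q) (H : ℝ) (hH0 : 0 < H) (hH1 : H < 1 - 1 / (2 * q))
    (B : ℝ → Ω → ℝ) (hB : IsFractionalBrownianMotion B H) :
    Tendsto
      (fun ε : ℝ =>
        (1 / (-Real.log ε)) *
          ∑' n : ℕ, (1 / ((n : ℝ) + 1)) *
            (ℙ {ω | ε * ((n : ℝ) + 1) < |hermiteVariation B H q (n + 1) ω|}).toReal)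
      (𝓝[>] 0) (𝓝 2) := by
  obtain ⟨D, E, hD, hE, hb⟩ := fbm_moments q hq H hH0 hH1 B hB
  simp only [hermiteVariation_eq]
  refine spitzer_abstract (fun ε n =>
    (ℙ : Measure Ω).real {ω | ε * ((n : ℝ) + 1) < |hsum q (fbmInc B H (n + 1)) ω|}) D hD
    (fun _ _ => measureReal_nonneg) (fun _ _ => measureReal_le_one) ?_ ?_
  · intro ε hε m
    have hs := fbm_stdGauss hH0 hB (m + 1)
    refine (chebyshev_two (hs.hsum_allLp q) (ε * ((m : ℝ) + 1)) (by positivity)).trans ?_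
    have := (hb (m + 1)).1
    push_cast at this
    calc _ ≤ D * ((m : ℝ) + 1) / (ε * ((m : ℝ) + 1)) ^ 2 := by gcongr
      _ = _ := by field_simp
  · intro τ hτ
    obtain ⟨δ, hδ, hsb⟩ := fbm_small_ball q hq H hH0 hH1 B hB τ hτ
    refine ⟨δ, hδ, fun ε hε m hm => ?_⟩
    have hs := fbm_stdGauss hH0 hB (m + 1)
    have hn0 : (0 : ℝ) < (m : ℝ) + 1 := by positivity
    have hle : ε * ((m : ℝ) + 1) ≤ δ * √((m : ℝ) + 1) := by
      apply le_of_sq_le_sq _ (by positivity)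
      rw [mul_pow, mul_pow, sq_sqrt hn0.le]
      nlinarith
    have hms : MeasurableSet {ω | |hsum q (fbmInc B H (m + 1)) ω| ≤ ε * ((m : ℝ) + 1)} :=
      measurableSet_le (hs.hsum_meas q).abs measurable_const
    have hc : {ω | ε * ((m : ℝ) + 1) < |hsum q (fbmInc B H (m + 1)) ω|} =
        {ω | |hsum q (fbmInc B H (m + 1)) ω| ≤ ε * ((m : ℝ) + 1)}ᶜ := by
      ext ω
      simp
    rw [hc, probReal_compl_eq_one_sub hms]
    have : (ℙ : Measure Ω).real {ω | |hsum q (fbmInc B H (m + 1)) ω| ≤ ε * ((m : ℝ) + 1)} ≤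
        (ℙ : Measure Ω).real {ω | |hsum q (fbmInc B H (m + 1)) ω| ≤ δ * √((m : ℝ) + 1)} :=
      measureReal_mono fun ω hω => le_trans hω hle
    linarith [hsb m]
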